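/- arXiv:2601.01203 — 6 statements merged into one kernel-verified Lean document; each statement's English description precedes it below -/
import Mathlib

section
/- Assume the interaction functions I and S satisfy the structural conditions (C1), (C2), (C3), and in addition that I and S are differentiable and there exist I_* > 0 and c_4 > 0 with S'(θ) ≥ c_4(I_* − I(θ)) for all θ ∈ ℝ, that I'(θ)S(θ) ≥ 0 for all θ ∈ ℝ, and that I(θ) > 0 for all θ ∈ (−π,π). Suppose κ > max{ (2(2c_2)^{p/q}/(c_1c_3)) · ‖Ω‖_∞/I_*^{1+p/q}, (2/(c_1c_3(π−α_0)^p)) · ‖Ω‖_∞/I_* }. Then for Lebesgue-almost every initial data (θ_1^0,…,θ_N^0) ∈ ℝ^N, the solution (θ_i)_{i=1}^N of the Winfree model satisfies: (a) liminf_{t→∞} R(t) > c_3I_*/2; and (b) limsup_{t→∞} θ_i(t) − liminf_{t→∞} θ_i(t) < 2π for all i = 1,…,N. -/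
/-!
Write `V` for the Winfree vector field on `ℝ^N` and `R` for the average influence. The proof splits
into a measure-theoretic statement (almost every solution reaches the influence level `a`, for any
`a < I*`) and a deterministic one (a solution that reaches a level `a` close enough to `I*` has the
required asymptotics).

**Reaching the level.** The divergence of `V` equals
`κ R ∑ S'(θᵢ) + (κ/N) ∑ S(θᵢ) I'(θᵢ) ≥ κ c₄ N R (I* - R)`,
so as long as `R ≤ a < I*` the flow expands volume at the rate `κ c₄ N (I* - a) R`. If the integral
of `R` grows linearly in time, the expansion is exponential, whereas the image of a ball under the
flow stays in a ball of linearly growing radius, so the set of such initial data is null. To avoid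
differentiability of the flow (`I'` and `S'` need not be continuous), the flow is replaced by
iterated explicit Euler maps with small step: they are injective and differentiable, with Jacobian
matrix diagonal plus rank one (`prod_le_det_diagonal_add`, `eulerMap_det`), and the change of
variables formula gives the expansion (`volume_iterate`, `null_of_euler`). The Euler scheme is
uniformly close to the solutions (`euler_close`, `WData.close`).

**Growth of the accumulated influence.** If some `ωᵢ ≠ 0`, then whenever `R` is small the `i`-th
oscillator rotates and visits phases of positive influence; this is quantified with a bounded
primitive of `I` minus its mean (`WData.null_of_freq_ne`). If all frequencies vanish, an oscillator
that does not start at `π` modulo `2π` stays at a positive distance from `π` modulo `2π`, and `R`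
has a positive lower bound (`lower_of_freq_zero`, `WData.null_of_lower`).

**Trapping.** If `R ≥ a` at some time, the oscillators that are then in `[-β, β]` modulo `2π` stay
trapped and keep `R ≥ c₃ a (N + 1) / (2N)` from then on (`influence_persists`). The factor
`(N + 1) / N` allows `a` to be chosen strictly below `I*` while this bound exceeds `c₃ I* / 2`
(`exists_level`). The intervals `[2πk - β, 2πk + β]` are then forward invariant, so each phase ends
up either in one of them or in a gap between two of them, which bounds its oscillation
(`osc_of_barrier`).
-/

open MeasureTheory Filter

/-- The average influence `R(t) = (1/N) ∑ⱼ I(θⱼ(t))` of the Winfree model. -/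
noncomputable def avgInfl (N : ℕ) (I : ℝ → ℝ) (θ : Fin N → ℝ → ℝ) (t : ℝ) : ℝ :=
  (N : ℝ)⁻¹ * ∑ j, I (θ j t)

/-- `θ` is the solution of the Winfree model with influence function `I`, sensitivity
function `S`, frequencies `ω`, coupling strength `κ` and initial data `θ0`. -/
def IsGenWinfreeSol (N : ℕ) (ω : Fin N → ℝ) (κ : ℝ) (I S : ℝ → ℝ)
    (θ0 : Fin N → ℝ) (θ : Fin N → ℝ → ℝ) : Prop :=
  (∀ i, θ i 0 = θ0 i) ∧
  ∀ i, ∀ t : ℝ, 0 ≤ t →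
    HasDerivAt (θ i) (ω i + κ / (N : ℝ) * S (θ i t) * ∑ j, I (θ j t)) t

/-- `I` and `S` are `2π`-periodic Lipschitz functions. -/
def GoodIS (I S : ℝ → ℝ) : Prop :=
  Function.Periodic I (2 * Real.pi) ∧ Function.Periodic S (2 * Real.pi) ∧
  (∃ K : NNReal, LipschitzWith K I) ∧ (∃ K : NNReal, LipschitzWith K S)

/-- The structural conditions (C1), (C2), (C3) on the interaction functions,
with angle `α₀ ∈ (0,π)`, exponents `p, q ≥ 1` and constants `c₁, c₂ > 0`, `c₃ ∈ (0,1]`. -/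
def StructC (I S : ℝ → ℝ) (α₀ p q c₁ c₂ c₃ : ℝ) : Prop :=
  α₀ ∈ Set.Ioo 0 Real.pi ∧ 1 ≤ p ∧ 1 ≤ q ∧ 0 < c₁ ∧ 0 < c₂ ∧ c₃ ∈ Set.Ioc (0:ℝ) 1 ∧
  (∀ x ∈ Set.Icc α₀ Real.pi, S x ≤ -c₁ * (Real.pi - x) ^ p) ∧
  (∀ x ∈ Set.Icc (-Real.pi) (-α₀), c₁ * (x + Real.pi) ^ p ≤ S x) ∧
  (∀ x ∈ Set.Icc (-Real.pi) Real.pi, 0 ≤ I x ∧ I x ≤ c₂ * (Real.pi - |x|) ^ q) ∧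
  (∀ x ∈ Set.Icc (-Real.pi) Real.pi, ∀ φ : ℝ, |φ| ≤ max |x| α₀ → c₃ * I x ≤ I φ)

/-- `sup_{t ≥ 0} f(t) - inf_{t ≥ 0} f(t) < 2π` (in particular `f` is bounded on `[0,∞)`). -/
def OscLt2Pi (f : ℝ → ℝ) : Prop :=
  BddAbove (f '' Set.Ici 0) ∧ BddBelow (f '' Set.Ici 0) ∧
    sSup (f '' Set.Ici 0) - sInf (f '' Set.Ici 0) < 2 * Real.pi

/-! ### Euler maps and volume expansion -/

/-- The Winfree vector field on `ℝ^N`. -/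
noncomputable def wField (N : ℕ) (ω : Fin N → ℝ) (κ : ℝ) (I S : ℝ → ℝ)
    (x : Fin N → ℝ) : Fin N → ℝ :=
  fun i => ω i + κ / (N : ℝ) * S (x i) * ∑ j, I (x j)

/-- The average influence as a function of the configuration `x ∈ ℝ^N`. -/
noncomputable def infl (N : ℕ) (I : ℝ → ℝ) (x : Fin N → ℝ) : ℝ :=
  (N : ℝ)⁻¹ * ∑ j, I (x j)

/-- The explicit Euler map `x ↦ x + h V(x)` of the Winfree vector field `V` with step `h`. -/
noncomputable def eulerMap (N : ℕ) (ω : Fin N → ℝ) (κ : ℝ) (I S : ℝ → ℝ) (h : ℝ)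
    (x : Fin N → ℝ) : Fin N → ℝ :=
  x + h • wField N ω κ I S x

lemma exp_sub_two_sq_le {z : ℝ} (hz : |z| ≤ 1 / 2) : Real.exp (z - 2 * z ^ 2) ≤ 1 + z := by
  have h1 := (abs_le.1 hz).1
  have h2 := (abs_le.1 hz).2
  have h3 : 1 - (z - 2 * z ^ 2) ≤ Real.exp (-(z - 2 * z ^ 2)) := by
    have := Real.add_one_le_exp (-(z - 2 * z ^ 2)); linarith
  have h4 : 0 < 1 - (z - 2 * z ^ 2) := by nlinarith
  have h5 : 1 ≤ (1 + z) * (1 - (z - 2 * z ^ 2)) := by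
    nlinarith [mul_nonneg (sq_nonneg z) (by linarith : 0 ≤ 1 + 2 * z)]
  have h6 : Real.exp (z - 2 * z ^ 2) * Real.exp (-(z - 2 * z ^ 2)) = 1 := by
    rw [← Real.exp_add]; simp
  have h7 := Real.exp_pos (z - 2 * z ^ 2)
  by_contra! hc
  nlinarith [mul_lt_mul_of_pos_right hc h4, mul_le_mul_of_nonneg_left h3 h7.le]

/-- Determinant of a positive diagonal matrix plus a rank-one matrix `u vᵀ` with `uᵢ vᵢ ≥ 0`. -/
lemma prod_le_det_diagonal_add {N : ℕ} (d u v : Fin N → ℝ) (hd : ∀ i, 0 < d i)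
    (huv : ∀ i, 0 ≤ u i * v i) :
    ∏ i, d i ≤ (Matrix.of fun i j => Matrix.diagonal d i j + u i * v j).det := by
  have hdet : (Matrix.diagonal d).det = ∏ i, d i := Matrix.det_diagonal
  have hpos : 0 < ∏ i, d i := Finset.prod_pos fun i _ => hd i
  have hE : (Matrix.of fun i j => Matrix.diagonal d i j + u i * v j) =
      Matrix.diagonal d *
        (1 + Matrix.replicateCol (Fin 1) (fun i => u i / d i) * Matrix.replicateRow (Fin 1) v) := by
    ext i j
    rw [Matrix.diagonal_mul]
    simp only [Matrix.of_apply, Matrix.add_apply, Matrix.mul_apply, Matrix.replicateCol_apply,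
      Matrix.replicateRow_apply, Finset.univ_unique, Finset.sum_singleton]
    have := (hd i).ne'
    by_cases hij : i = j
    · subst hij; simp; field_simp
    · simp [hij]; field_simp
  have hrank : (1 + Matrix.replicateCol (Fin 1) (fun i => u i / d i) *
      Matrix.replicateRow (Fin 1) v).det = 1 + v ⬝ᵥ fun i => u i / d i := by
    convert Matrix.det_one_add_replicateCol_mul_replicateRow (ι := Fin 1) (fun i => u i / d i) v <;> rfl
  rw [hE, Matrix.det_mul, hdet, hrank]
  have : 0 ≤ v ⬝ᵥ fun i => u i / d i := by
    refine Finset.sum_nonneg fun i _ => ?_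
    have : v i * (u i / d i) = (u i * v i) / d i := by ring
    rw [this]
    exact div_nonneg (huv i) (hd i).le
  nlinarith

open scoped Matrix in
/-- Volume expansion of the Euler map: the Jacobian matrix is diagonal plus rank one, the rank-one
part only helps because `I' S ≥ 0`, and the diagonal part is controlled by `S' ≥ c₄ (I* - I)`. -/
lemma eulerMap_det (N : ℕ) (hN : 1 ≤ N) (ω : Fin N → ℝ) (κ : ℝ) (hκ : 0 ≤ κ) (I S : ℝ → ℝ)
    (hIdiff : Differentiable ℝ I) (hSdiff : Differentiable ℝ S)
    (Istar c₄ : ℝ) (hIstar : 0 < Istar) (hc₄ : 0 < c₄)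
    (hC4 : ∀ x : ℝ, c₄ * (Istar - I x) ≤ deriv S x)
    (hC5 : ∀ x : ℝ, 0 ≤ deriv I x * S x) (hI0 : ∀ x, 0 ≤ I x)
    (Im : ℝ) (hIm : ∀ x, I x ≤ Im) (h : ℝ) (hh : 0 ≤ h)
    (hsmall : h * (κ * Im * c₄ * (Istar + Im)) ≤ 1 / 2) (x : Fin N → ℝ) :
    ∃ T' : (Fin N → ℝ) →L[ℝ] (Fin N → ℝ), HasFDerivAt (eulerMap N ω κ I S h) T' x ∧
      Real.exp (h * (κ * c₄ * N * (infl N I x * (Istar - infl N I x)))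
        - 2 * N * (h * (κ * Im * c₄ * (Istar + Im))) ^ 2) ≤ |T'.det| := by
  have hNpos : (0 : ℝ) < N := by exact_mod_cast hN
  have hImn : 0 ≤ Im := (hI0 0).trans (hIm 0)
  set R := infl N I x with hR
  have hsum : ∑ j, I (x j) = N * R := by
    rw [hR, infl]; field_simp
  have hR0 : 0 ≤ R := by
    rw [hR, infl]; exact mul_nonneg (by positivity) (Finset.sum_nonneg fun j _ => hI0 _)
  have hRm : R ≤ Im := by
    have : ∑ j, I (x j) ≤ N * Im := by
      simpa using Finset.sum_le_sum (fun j (_ : j ∈ Finset.univ) => hIm (x j))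
    rw [hsum] at this
    exact le_of_mul_le_mul_left this hNpos
  let d : Fin N → ℝ := fun i => 1 + h * κ * R * deriv S (x i)
  let u : Fin N → ℝ := fun i => h * (κ / N) * S (x i)
  let v : Fin N → ℝ := fun i => deriv I (x i)
  let A : Matrix (Fin N) (Fin N) ℝ := Matrix.of fun i j => Matrix.diagonal d i j + u i * v j
  refine ⟨LinearMap.toContinuousLinearMap (Matrix.toLin' A), ?_, ?_⟩
  · refine hasFDerivAt_pi'' fun i => ?_
    have hp : ∀ j, HasFDerivAt (fun y : Fin N → ℝ => y j)
        (ContinuousLinearMap.proj (R := ℝ) (φ := fun _ : Fin N => ℝ) j) x :=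
      fun j => hasFDerivAt_apply j x
    have hSi := (hSdiff (x i)).hasDerivAt.comp_hasFDerivAt x (hp i)
    have hIs := HasFDerivAt.fun_sum (u := Finset.univ)
      (fun j _ => (hIdiff (x j)).hasDerivAt.comp_hasFDerivAt x (hp j))
    have hall := (hp i).add (((((hSi.const_mul (κ / N)).mul hIs)).const_add (ω i)).const_mul h)
    refine (hall.congr_fderiv ?_)
    ext y
    have h1 : (A *ᵥ y) i = d i * y i + u i * ∑ j, v j * y j := by
      simp only [Matrix.mulVec, dotProduct, A, Matrix.of_apply, add_mul, Finset.sum_add_distrib,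
        Finset.mul_sum, Matrix.diagonal_apply]
      simp [mul_assoc]
    simp only [ContinuousLinearMap.coe_comp, Function.comp_apply, ContinuousLinearMap.proj_apply,
      LinearMap.coe_toContinuousLinearMap', Matrix.toLin'_apply, h1]
    simp only [d, u, v, _root_.add_apply, _root_.smul_apply,
      _root_.sum_apply, ContinuousLinearMap.proj_apply, smul_eq_mul, hsum]
    field_simp
    ring
  · have hdet : (LinearMap.toContinuousLinearMap (Matrix.toLin' A)).det = A.det := by
      simp [ContinuousLinearMap.det]
    rw [hdet]
    let z : Fin N → ℝ := fun i => h * κ * R * (c₄ * (Istar - I (x i)))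
    have hzabs : ∀ i, |z i| ≤ h * (κ * Im * c₄ * (Istar + Im)) := by
      intro i
      have h1 : |Istar - I (x i)| ≤ Istar + Im := by
        rw [abs_le]; constructor <;> linarith [hI0 (x i), hIm (x i)]
      calc |z i| = h * (κ * R * c₄ * |Istar - I (x i)|) := by
            simp only [z, abs_mul, abs_of_nonneg hh, abs_of_nonneg hκ, abs_of_nonneg hR0,
              abs_of_nonneg hc₄.le]
            ring
        _ ≤ _ := by gcongr
    have hzd : ∀ i, 1 + z i ≤ d i := by
      intro i
      simp only [z, d]
      have : 0 ≤ h * κ * R := by positivity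
      nlinarith [mul_le_mul_of_nonneg_left (hC4 (x i)) this]
    have hdpos : ∀ i, 0 < d i := by
      intro i
      have := (abs_le.1 ((hzabs i).trans hsmall)).1
      linarith [hzd i]
    have hmain := prod_le_det_diagonal_add d u v hdpos (by
      intro i
      have : 0 ≤ h * (κ / N) := by positivity
      simp only [u, v]
      nlinarith [mul_nonneg this (hC5 (x i))])
    refine le_trans ?_ (hmain.trans (le_abs_self _))
    have h2 : ∏ i, Real.exp (z i - 2 * z i ^ 2) ≤ ∏ i, d i :=
      Finset.prod_le_prod (fun i _ => (Real.exp_pos _).le) fun i _ =>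
        (exp_sub_two_sq_le ((hzabs i).trans hsmall)).trans (hzd i)
    refine le_trans ?_ h2
    rw [← Real.exp_sum]
    apply Real.exp_le_exp.2
    have h3 : ∑ i, z i = h * (κ * c₄ * N * (R * (Istar - R))) := by
      simp only [z, ← Finset.mul_sum, Finset.sum_sub_distrib, hsum]
      simp; ring
    have h4 : ∑ i, 2 * z i ^ 2 ≤ 2 * N * (h * (κ * Im * c₄ * (Istar + Im))) ^ 2 := by
      calc ∑ i, 2 * z i ^ 2 ≤ ∑ _i : Fin N, 2 * (h * (κ * Im * c₄ * (Istar + Im))) ^ 2 := by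
            refine Finset.sum_le_sum fun i _ => ?_
            have := sq_le_sq' (by linarith [abs_nonneg (z i), hzabs i]) (hzabs i)
            rw [sq_abs] at this
            linarith
        _ = _ := by simp; ring
    rw [Finset.sum_sub_distrib, h3]
    linarith

/-- If `T` is injective and its log-Jacobian is at least `g`, then `T^[n]` expands the volume of a
set by the exponential of the least Birkhoff sum of `g` on that set. -/
lemma volume_iterate {N : ℕ} (T : (Fin N → ℝ) → (Fin N → ℝ)) (hinj : Function.Injective T)
    (g : (Fin N → ℝ) → ℝ)
    (hT : ∀ x, ∃ T' : (Fin N → ℝ) →L[ℝ] (Fin N → ℝ), HasFDerivAt T T' x ∧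
      Real.exp (g x) ≤ |T'.det|)
    (n : ℕ) (D : ℝ) (s : Set (Fin N → ℝ)) (hs : MeasurableSet s)
    (hD : ∀ x ∈ s, D ≤ ∑ k ∈ Finset.range n, g (T^[k] x)) :
    ENNReal.ofReal (Real.exp D) * volume s ≤ volume (T^[n] '' s) := by
  have key : ∀ n : ℕ, ∀ x, ∃ T' : (Fin N → ℝ) →L[ℝ] (Fin N → ℝ), HasFDerivAt (T^[n]) T' x ∧
      Real.exp (∑ k ∈ Finset.range n, g (T^[k] x)) ≤ |T'.det| := by
    intro n x
    induction n with
    | zero =>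
      refine ⟨ContinuousLinearMap.id ℝ _, ?_, ?_⟩
      · exact hasFDerivAt_id x
      · simp [ContinuousLinearMap.det]
    | succ n ih =>
      obtain ⟨A, hA, hA'⟩ := ih
      obtain ⟨B, hB, hB'⟩ := hT (T^[n] x)
      refine ⟨B.comp A, ?_, ?_⟩
      · rw [Function.iterate_succ']
        exact hB.comp x hA
      · have : (B.comp A).det = B.det * A.det := by
          simp [ContinuousLinearMap.det]
        rw [this, abs_mul, Finset.sum_range_succ, Real.exp_add, mul_comm]
        exact mul_le_mul hB' hA' (Real.exp_pos _).le (abs_nonneg _)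
  choose f' hf' hdet using key n
  rw [← lintegral_abs_det_fderiv_eq_addHaar_image volume hs
    (fun x _ => (hf' x).hasFDerivWithinAt) ((hinj.iterate n).injOn)]
  rw [← setLIntegral_const]
  refine setLIntegral_mono' hs fun x hx => ?_
  exact ENNReal.ofReal_le_ofReal ((Real.exp_le_exp.2 (hD x hx)).trans (hdet x))

/-- A bounded set is Lebesgue null as soon as, over every long time `τ`, sufficiently fine Euler
iterations expand its volume by a factor exponential in `τ`: the iterates move points by at most
`τ M`, so the volume of the image grows only polynomially. -/
lemma null_of_euler {N : ℕ} (T : ℝ → (Fin N → ℝ) → (Fin N → ℝ)) (g : ℝ → (Fin N → ℝ) → ℝ)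
    (M L c C h0 : ℝ) (hM : 0 ≤ M) (hL : 0 ≤ L) (hc : 0 < c) (hh0 : 0 < h0)
    (hTc : ∀ h, Continuous (T h)) (hgc : ∀ h, Continuous (g h))
    (hstep : ∀ h, 0 ≤ h → ∀ x, ‖T h x - x‖ ≤ h * M)
    (hgood : ∀ h, 0 ≤ h → h ≤ h0 → Function.Injective (T h) ∧
      ∀ x, ∃ T' : (Fin N → ℝ) →L[ℝ] (Fin N → ℝ), HasFDerivAt (T h) T' x ∧
        Real.exp (g h x) ≤ |T'.det|)
    (B : Set (Fin N → ℝ)) (hB : B ⊆ Metric.closedBall 0 L)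
    (hsum : ∀ τ : ℕ, 0 < τ → ∀ᶠ n : ℕ in atTop, ∀ x ∈ B,
      c * τ - C ≤ ∑ k ∈ Finset.range n, g ((τ : ℝ) / n) ((T ((τ : ℝ) / n))^[k] x)) :
    volume B = 0 := by
  have bound : ∀ τ : ℕ, 0 < τ →
      volume B ≤ ENNReal.ofReal (Real.exp (C - c * τ) * (2 * (L + τ * M)) ^ N) := by
    intro τ hτ
    have hτ' : (0 : ℝ) < τ := by exact_mod_cast hτ
    have hsmall : ∀ᶠ n : ℕ in atTop, (τ : ℝ) / n ≤ h0 :=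
      (tendsto_const_div_atTop_nhds_zero_nat (τ : ℝ)).eventually_le_const hh0
    obtain ⟨n, hn1, hn2, hn0⟩ :=
      ((hsum τ hτ).and (hsmall.and (eventually_gt_atTop 0))).exists
    have hn0' : (0 : ℝ) < n := by exact_mod_cast hn0
    set h : ℝ := (τ : ℝ) / n with hh
    have hhpos : 0 ≤ h := by positivity
    have hnh : (n : ℝ) * h = τ := by rw [hh]; field_simp
    obtain ⟨hinj, hder⟩ := hgood h hhpos hn2
    let s : Set (Fin N → ℝ) := Metric.closedBall 0 L ∩
      {x | c * τ - C ≤ ∑ k ∈ Finset.range n, g h ((T h)^[k] x)}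
    have hs : MeasurableSet s := by
      refine (Metric.isClosed_closedBall.inter (isClosed_le continuous_const ?_)).measurableSet
      exact continuous_finsetSum _ fun k _ => (hgc h).comp ((hTc h).iterate k)
    have hBs : B ⊆ s := fun x hx => ⟨hB hx, hn1 x hx⟩
    have hvol := volume_iterate (T h) hinj (g h) hder n (c * τ - C) s hs fun x hx => hx.2
    have hmove : ∀ k : ℕ, ∀ x, ‖(T h)^[k] x - x‖ ≤ k * (h * M) := by
      intro k x
      induction k with
      | zero => simp
      | succ k ih =>
        rw [Function.iterate_succ_apply']
        have h1 := norm_add_le (T h ((T h)^[k] x) - (T h)^[k] x) ((T h)^[k] x - x)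
        rw [sub_add_sub_cancel] at h1
        have h2 := hstep h hhpos ((T h)^[k] x)
        push_cast
        linarith
    have himg : (T h)^[n] '' s ⊆ Metric.closedBall 0 (L + τ * M) := by
      rintro _ ⟨x, hx, rfl⟩
      have h1 : ‖x‖ ≤ L := by simpa using hx.1
      have h2 := hmove n x
      rw [← mul_assoc, hnh] at h2
      have h3 := norm_add_le ((T h)^[n] x - x) x
      rw [sub_add_cancel] at h3
      rw [mem_closedBall_zero_iff]
      linarith
    have hLM : 0 ≤ L + τ * M := by positivity
    have hball : volume (Metric.closedBall (0 : Fin N → ℝ) (L + τ * M)) =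
        ENNReal.ofReal ((2 * (L + τ * M)) ^ N) := by
      rw [Real.volume_pi_closedBall _ hLM]; simp
    have h1 : ENNReal.ofReal (Real.exp (c * τ - C)) * volume B ≤
        ENNReal.ofReal ((2 * (L + τ * M)) ^ N) :=
      calc _ ≤ ENNReal.ofReal (Real.exp (c * τ - C)) * volume s := by gcongr
        _ ≤ _ := hvol
        _ ≤ _ := measure_mono himg
        _ = _ := hball
    have h2 : ENNReal.ofReal (Real.exp (C - c * τ)) * ENNReal.ofReal (Real.exp (c * τ - C)) = 1 := by
      rw [← ENNReal.ofReal_mul (Real.exp_pos _).le, ← Real.exp_add]; simp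
    calc volume B = ENNReal.ofReal (Real.exp (C - c * τ)) *
          (ENNReal.ofReal (Real.exp (c * τ - C)) * volume B) := by
          rw [← mul_assoc, h2, one_mul]
      _ ≤ ENNReal.ofReal (Real.exp (C - c * τ)) * ENNReal.ofReal ((2 * (L + τ * M)) ^ N) := by
          gcongr
      _ = _ := (ENNReal.ofReal_mul (Real.exp_pos _).le).symm
  have hlim : Tendsto (fun τ : ℕ => Real.exp (C - c * τ) * (2 * (L + τ * M)) ^ N) atTop
      (nhds 0) := by
    have h1 : Tendsto (fun τ : ℕ => c * (τ : ℝ)) atTop atTop :=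
      tendsto_natCast_atTop_atTop.const_mul_atTop hc
    have h2 := ((Real.tendsto_pow_mul_exp_neg_atTop_nhds_zero N).comp h1).const_mul
      (Real.exp C * (2 * (L + M) / c) ^ N)
    rw [mul_zero] at h2
    refine squeeze_zero' (Eventually.of_forall fun τ => by positivity) ?_ h2
    filter_upwards [eventually_ge_atTop 1] with τ hτ
    have hτ' : (1 : ℝ) ≤ τ := by exact_mod_cast hτ
    have h3 : (2 * (L + τ * M)) ^ N ≤ (2 * (L + M) / c * (c * τ)) ^ N := by
      apply pow_le_pow_left₀ (by positivity)
      have : 2 * (L + M) / c * (c * τ) = 2 * (L * τ + τ * M) := by field_simp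
      rw [this]
      nlinarith
    rw [mul_pow (2 * (L + M) / c)] at h3
    simp only [Function.comp_apply]
    calc _ ≤ Real.exp (C - c * τ) * ((2 * (L + M) / c) ^ N * (c * τ) ^ N) := by gcongr
      _ = _ := by rw [sub_eq_add_neg, Real.exp_add]; ring
  have hlim' := ENNReal.tendsto_ofReal hlim
  rw [ENNReal.ofReal_zero] at hlim'
  refine le_antisymm (ge_of_tendsto hlim' ?_) bot_le
  filter_upwards [eventually_gt_atTop 0] with τ hτ using bound τ hτ

/-! ### Euler approximation -/

/-- Global error of the explicit Euler method for a bounded Lipschitz vector field. -/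
lemma euler_close {E : Type*} [NormedAddCommGroup E] [NormedSpace ℝ E] (V : E → E) (K M : ℝ)
    (hK : 0 ≤ K) (hLip : ∀ x y, ‖V x - V y‖ ≤ K * ‖x - y‖) (hM : ∀ x, ‖V x‖ ≤ M)
    (θ : ℝ → E) (hθ : ∀ t : ℝ, 0 ≤ t → HasDerivAt θ (V (θ t)) t) (h : ℝ) (hh : 0 ≤ h) (k : ℕ) :
    ‖θ (k * h) - (fun x => x + h • V x)^[k] (θ 0)‖ ≤ M * h * ((1 + h * K) ^ k - 1) := by
  have hM0 : 0 ≤ M := (norm_nonneg _).trans (hM (θ 0))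
  have hone : ∀ t : ℝ, 0 ≤ t → ‖θ (t + h) - θ t - h • V (θ t)‖ ≤ K * M * h * h := by
    intro t ht
    have hdisp : ∀ s ∈ Set.Icc t (t + h), ‖θ s - θ t‖ ≤ M * (s - t) :=
      norm_image_sub_le_of_norm_deriv_le_segment'
        (fun s hs => (hθ s (ht.trans hs.1)).hasDerivWithinAt) fun s _ => hM _
    have h2 := norm_image_sub_le_of_norm_deriv_le_segment'
      (f := fun s => θ s - (s - t) • V (θ t)) (f' := fun s => V (θ s) - V (θ t))
      (a := t) (b := t + h) (C := K * M * h) (fun s hs => by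
        have h3 := ((hasDerivAt_id s).sub_const t).smul_const (V (θ t))
        have h4 := (hθ s (ht.trans hs.1)).fun_sub h3
        simpa using h4.hasDerivWithinAt) (fun s hs => by
        have h3 := hdisp s ⟨hs.1, hs.2.le⟩
        have h4 : M * (s - t) ≤ M * h := by
          have := hs.2; apply mul_le_mul_of_nonneg_left _ hM0; linarith
        calc _ ≤ K * ‖θ s - θ t‖ := hLip _ _
          _ ≤ K * (M * h) := by gcongr; linarith
          _ = _ := by ring) (t + h) ⟨by linarith, le_rfl⟩
    simp only [add_sub_cancel_left, sub_self, zero_smul, sub_zero] at h2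
    convert h2 using 2
    abel
  induction k with
  | zero => simp
  | succ k ih =>
    rw [Function.iterate_succ_apply']
    set y := (fun x => x + h • V x)^[k] (θ 0) with hy
    have h1 := hone (k * h) (by positivity)
    have hk : ((k + 1 : ℕ) : ℝ) * h = k * h + h := by push_cast; ring
    rw [hk]
    have h2 : θ (k * h + h) - (y + h • V y) = (θ (k * h + h) - θ (k * h) - h • V (θ (k * h))) +
        ((θ (k * h) - y) + h • (V (θ (k * h)) - V y)) := by
      rw [smul_sub]; abel
    rw [h2]
    have h3 : ‖h • (V (θ (k * h)) - V y)‖ ≤ h * (K * ‖θ (k * h) - y‖) := by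
      rw [norm_smul, Real.norm_of_nonneg hh]
      gcongr
      exact hLip _ _
    have h4 := norm_add_le (θ (k * h + h) - θ (k * h) - h • V (θ (k * h)))
      ((θ (k * h) - y) + h • (V (θ (k * h)) - V y))
    have h5 := norm_add_le (θ (k * h) - y) (h • (V (θ (k * h)) - V y))
    have h6 : (1 + h * K) * ‖θ (k * h) - y‖ ≤ (1 + h * K) * (M * h * ((1 + h * K) ^ k - 1)) :=
      mul_le_mul_of_nonneg_left ih (by positivity)
    calc _ ≤ K * M * h * h + (1 + h * K) * ‖θ (k * h) - y‖ := by linarith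
      _ ≤ K * M * h * h + (1 + h * K) * (M * h * ((1 + h * K) ^ k - 1)) := by gcongr
      _ = _ := by ring

/-! ### Bounds for the Winfree field -/

lemma infl_lip {N : ℕ} (hN : 1 ≤ N) (I : ℝ → ℝ) (K : ℝ)
    (hI : ∀ x y, |I x - I y| ≤ K * |x - y|) (hK : 0 ≤ K) (x y : Fin N → ℝ) :
    |infl N I x - infl N I y| ≤ K * ‖x - y‖ := by
  have hNpos : (0 : ℝ) < N := by exact_mod_cast hN
  have h1 : |∑ j, (I (x j) - I (y j))| ≤ N * (K * ‖x - y‖) := by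
    refine (Finset.abs_sum_le_sum_abs _ _).trans ?_
    calc _ ≤ ∑ _j : Fin N, K * ‖x - y‖ := by
          refine Finset.sum_le_sum fun j _ => (hI _ _).trans ?_
          exact mul_le_mul_of_nonneg_left (norm_le_pi_norm (x - y) j) hK
      _ = _ := by simp
  rw [infl, infl, ← mul_sub, ← Finset.sum_sub_distrib, abs_mul, abs_of_pos (inv_pos.2 hNpos)]
  calc _ ≤ (N : ℝ)⁻¹ * (N * (K * ‖x - y‖)) := by gcongr
    _ = _ := by field_simp

lemma infl_nonneg {N : ℕ} (I : ℝ → ℝ) (h : ∀ x, 0 ≤ I x) (x : Fin N → ℝ) : 0 ≤ infl N I x :=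
  mul_nonneg (by positivity) (Finset.sum_nonneg fun _ _ => h _)

lemma infl_le {N : ℕ} (hN : 1 ≤ N) (I : ℝ → ℝ) (Im : ℝ) (h : ∀ x, I x ≤ Im) (x : Fin N → ℝ) :
    infl N I x ≤ Im := by
  have hNpos : (0 : ℝ) < N := by exact_mod_cast hN
  have : ∑ j, I (x j) ≤ N * Im := by
    simpa using Finset.sum_le_sum (fun j (_ : j ∈ Finset.univ) => h (x j))
  rw [infl]
  calc _ ≤ (N : ℝ)⁻¹ * (N * Im) := by gcongr
    _ = _ := by field_simp

lemma le_infl {N : ℕ} (hN : 1 ≤ N) (I : ℝ → ℝ) (h : ∀ x, 0 ≤ I x) (x : Fin N → ℝ) (i : Fin N) :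
    I (x i) ≤ N * infl N I x := by
  have hNpos : (0 : ℝ) < N := by exact_mod_cast hN
  rw [infl, mul_inv_cancel_left₀ hNpos.ne']
  exact Finset.single_le_sum (f := fun j => I (x j)) (fun j _ => h _) (Finset.mem_univ i)

lemma wField_apply {N : ℕ} (hN : 1 ≤ N) (ω : Fin N → ℝ) (κ : ℝ) (I S : ℝ → ℝ) (x : Fin N → ℝ)
    (i : Fin N) : wField N ω κ I S x i = ω i + κ * infl N I x * S (x i) := by
  have hNpos : (0 : ℝ) < N := by exact_mod_cast hN
  simp only [wField, infl]
  field_simp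

lemma wField_bound {N : ℕ} (hN : 1 ≤ N) (ω : Fin N → ℝ) (κ Ωn Im Sm : ℝ) (I S : ℝ → ℝ)
    (hκ : 0 ≤ κ) (hω : ∀ i, |ω i| ≤ Ωn) (hI0 : ∀ x, 0 ≤ I x) (hIm : ∀ x, I x ≤ Im)
    (hSm : ∀ x, |S x| ≤ Sm) (hM : 0 ≤ Ωn + κ * Im * Sm) (x : Fin N → ℝ) :
    ‖wField N ω κ I S x‖ ≤ Ωn + κ * Im * Sm := by
  rw [pi_norm_le_iff_of_nonneg hM]
  intro i
  rw [wField_apply hN, Real.norm_eq_abs]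
  refine (abs_add_le _ _).trans (add_le_add (hω i) ?_)
  have h0 := infl_nonneg I hI0 x
  rw [abs_mul, abs_of_nonneg (mul_nonneg hκ h0)]
  have h1 := infl_le hN I Im hIm x
  have h2 := hSm (x i)
  have h3 : 0 ≤ Im := h0.trans h1
  gcongr

lemma wField_lip {N : ℕ} (hN : 1 ≤ N) (ω : Fin N → ℝ) (κ Im Sm KI KS : ℝ) (I S : ℝ → ℝ)
    (hκ : 0 ≤ κ) (hI0 : ∀ x, 0 ≤ I x) (hIm : ∀ x, I x ≤ Im)
    (hSm : ∀ x, |S x| ≤ Sm) (hKI : 0 ≤ KI) (hKS : 0 ≤ KS)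
    (hI : ∀ x y, |I x - I y| ≤ KI * |x - y|) (hS : ∀ x y, |S x - S y| ≤ KS * |x - y|)
    (x y : Fin N → ℝ) :
    ‖wField N ω κ I S x - wField N ω κ I S y‖ ≤ κ * (KI * Sm + Im * KS) * ‖x - y‖ := by
  have hSm0 : 0 ≤ Sm := (abs_nonneg _).trans (hSm 0)
  have hIm0 : 0 ≤ Im := (hI0 0).trans (hIm 0)
  rw [pi_norm_le_iff_of_nonneg (by positivity)]
  intro i
  rw [Pi.sub_apply, wField_apply hN, wField_apply hN, Real.norm_eq_abs]
  have h1 := infl_lip hN I KI hI hKI x y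
  have h2 : |S (x i) - S (y i)| ≤ KS * ‖x - y‖ :=
    (hS _ _).trans (mul_le_mul_of_nonneg_left (norm_le_pi_norm (x - y) i) hKS)
  have h3 : ω i + κ * infl N I x * S (x i) - (ω i + κ * infl N I y * S (y i)) =
      κ * ((infl N I x - infl N I y) * S (x i) + infl N I y * (S (x i) - S (y i))) := by ring
  rw [h3, abs_mul, abs_of_nonneg hκ, mul_assoc]
  refine mul_le_mul_of_nonneg_left ((abs_add_le _ _).trans ?_) hκ
  rw [abs_mul, abs_mul, abs_of_nonneg (infl_nonneg I hI0 y)]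
  have h4 := infl_le hN I Im hIm y
  have h5 := infl_nonneg I hI0 y
  calc _ ≤ (KI * ‖x - y‖) * Sm + Im * (KS * ‖x - y‖) := by
        gcongr
        exact hSm _
    _ = _ := by ring

/-! ### Null sets of initial data with small influence -/

/-- The quantitative consequences of the hypotheses that the volume argument uses: bounds `Im`,
`Sm` and Lipschitz constants `KI`, `KS` for `I`, `S`, and the pointwise conditions on `I'`, `S'`. -/
structure WData (N : ℕ) (ω : Fin N → ℝ) (κ : ℝ) (I S : ℝ → ℝ)
    (Ωn Im Sm KI KS Istar c₄ : ℝ) : Prop where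
  hN : 1 ≤ N
  hκ : 0 < κ
  hω : ∀ i, |ω i| ≤ Ωn
  hI0 : ∀ x, 0 ≤ I x
  hIm : ∀ x, I x ≤ Im
  hSm : ∀ x, |S x| ≤ Sm
  hKI : 0 ≤ KI
  hKS : 0 ≤ KS
  hI : ∀ x y, |I x - I y| ≤ KI * |x - y|
  hS : ∀ x y, |S x - S y| ≤ KS * |x - y|
  hIdiff : Differentiable ℝ I
  hSdiff : Differentiable ℝ S
  hIstar : 0 < Istar
  hc₄ : 0 < c₄
  hC4 : ∀ x : ℝ, c₄ * (Istar - I x) ≤ deriv S x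
  hC5 : ∀ x : ℝ, 0 ≤ deriv I x * S x

namespace WData

variable {N : ℕ} {ω : Fin N → ℝ} {κ : ℝ} {I S : ℝ → ℝ} {Ωn Im Sm KI KS Istar c₄ : ℝ}

lemma Im_nonneg (W : WData N ω κ I S Ωn Im Sm KI KS Istar c₄) : 0 ≤ Im := (W.hI0 0).trans (W.hIm 0)

lemma Sm_nonneg (W : WData N ω κ I S Ωn Im Sm KI KS Istar c₄) : 0 ≤ Sm :=
  (abs_nonneg _).trans (W.hSm 0)

lemma Ωn_nonneg (W : WData N ω κ I S Ωn Im Sm KI KS Istar c₄) : 0 ≤ Ωn :=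
  (abs_nonneg _).trans (W.hω ⟨0, W.hN⟩)

lemma speed_nonneg (W : WData N ω κ I S Ωn Im Sm KI KS Istar c₄) : 0 ≤ Ωn + κ * Im * Sm := by
  have := W.Im_nonneg; have := W.Sm_nonneg; have := W.Ωn_nonneg; have := W.hκ
  positivity

lemma bound (W : WData N ω κ I S Ωn Im Sm KI KS Istar c₄) (x : Fin N → ℝ) :
    ‖wField N ω κ I S x‖ ≤ Ωn + κ * Im * Sm :=
  wField_bound W.hN ω κ Ωn Im Sm I S W.hκ.le W.hω W.hI0 W.hIm W.hSm W.speed_nonneg x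

lemma lip (W : WData N ω κ I S Ωn Im Sm KI KS Istar c₄) (x y : Fin N → ℝ) :
    ‖wField N ω κ I S x - wField N ω κ I S y‖ ≤ κ * (KI * Sm + Im * KS) * ‖x - y‖ :=
  wField_lip W.hN ω κ Im Sm KI KS I S W.hκ.le W.hI0 W.hIm W.hSm W.hKI W.hKS W.hI W.hS x y

/-- Liouville-type principle: a bounded set of points along whose Euler orbits the influence stays
below `a < I*`, while its accumulated value grows linearly in time, is Lebesgue null. -/
lemma null (W : WData N ω κ I S Ωn Im Sm KI KS Istar c₄) (a δ C0 L : ℝ) (ha : a < Istar)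
    (hδ : 0 < δ) (hL : 0 ≤ L) (B : Set (Fin N → ℝ)) (hB : B ⊆ Metric.closedBall 0 L)
    (hsum : ∀ τ : ℕ, 0 < τ → ∀ᶠ n : ℕ in atTop, ∀ x ∈ B,
      (∀ k < n, infl N I ((eulerMap N ω κ I S ((τ : ℝ) / n))^[k] x) ≤ a) ∧
      δ * τ - C0 ≤ ∑ k ∈ Finset.range n,
        ((τ : ℝ) / n) * infl N I ((eulerMap N ω κ I S ((τ : ℝ) / n))^[k] x)) :
    volume B = 0 := by
  have hN := W.hN
  have hκ := W.hκ
  have hc₄ := W.hc₄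
  have hIs := W.hIstar
  have hImn := W.Im_nonneg
  have hSmn := W.Sm_nonneg
  have hKI := W.hKI
  have hKS := W.hKS
  have hNpos : (0 : ℝ) < N := by exact_mod_cast hN
  have hIcont := W.hIdiff.continuous
  have hScont := W.hSdiff.continuous
  have hRcont : Continuous (infl N I) := by unfold infl; fun_prop
  set K : ℝ := κ * (KI * Sm + Im * KS) with hKdef
  set Z : ℝ := κ * Im * c₄ * (Istar + Im) with hZdef
  have hK0 : 0 ≤ K := by positivity
  have hZ0 : 0 ≤ Z := by positivity
  set c1 : ℝ := κ * c₄ * N * (Istar - a) with hc1def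
  have hc1 : 0 < c1 := by have := sub_pos.2 ha; positivity
  refine null_of_euler (eulerMap N ω κ I S)
    (fun h x => h * (κ * c₄ * N * (infl N I x * (Istar - infl N I x))) - 2 * N * (h * Z) ^ 2)
    (Ωn + κ * Im * Sm) L (c1 * δ) (c1 * C0 + 1) (1 / (2 * (Z + K + 1))) W.speed_nonneg hL
    (by positivity) (by positivity) ?_ ?_ ?_ ?_ B hB ?_
  · intro h
    unfold eulerMap wField
    fun_prop
  · intro h
    fun_prop
  · intro h hh x
    simp only [eulerMap, add_sub_cancel_left]
    rw [norm_smul, Real.norm_of_nonneg hh]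
    exact mul_le_mul_of_nonneg_left (W.bound x) hh
  · intro h hh hhle
    have h1 : h * (2 * (Z + K + 1)) ≤ 1 := by
      rwa [le_div_iff₀ (by positivity)] at hhle
    have h2 : 0 ≤ h * Z := by positivity
    have h3 : 0 ≤ h * K := by positivity
    refine ⟨fun x y hxy => ?_, fun x => ?_⟩
    · simp only [eulerMap] at hxy
      have h4 : x - y = h • (wField N ω κ I S y - wField N ω κ I S x) := by
        rw [smul_sub, sub_eq_sub_iff_add_eq_add, hxy, add_comm]
      have h5 : ‖x - y‖ ≤ h * (K * ‖x - y‖) := by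
        conv_lhs => rw [h4]
        rw [norm_smul, Real.norm_of_nonneg hh, norm_sub_rev]
        exact mul_le_mul_of_nonneg_left (W.lip x y) hh
      have h6 : ‖x - y‖ = 0 := by nlinarith [norm_nonneg (x - y)]
      exact sub_eq_zero.1 (norm_eq_zero.1 h6)
    · exact eulerMap_det N hN ω κ hκ.le I S W.hIdiff W.hSdiff Istar c₄ hIs hc₄ W.hC4 W.hC5
        W.hI0 Im W.hIm h hh (by linarith) x
  · intro τ hτ
    have hτ' : (0 : ℝ) < τ := by exact_mod_cast hτ
    have hsmall : ∀ᶠ n : ℕ in atTop, 2 * N * Z ^ 2 * (τ : ℝ) ^ 2 / n ≤ 1 :=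
      (tendsto_const_div_atTop_nhds_zero_nat _).eventually_le_const one_pos
    filter_upwards [hsum τ hτ, hsmall, eventually_gt_atTop 0] with n hn1 hn2 hn0 x hx
    have hn0' : (0 : ℝ) < n := by exact_mod_cast hn0
    obtain ⟨hle, hS⟩ := hn1 x hx
    set h : ℝ := (τ : ℝ) / n with hh
    have hhpos : 0 ≤ h := by positivity
    set y : ℕ → Fin N → ℝ := fun k => (eulerMap N ω κ I S h)^[k] x with hy
    have h1 : ∀ k ∈ Finset.range n, c1 * (h * infl N I (y k)) - 2 * N * (h * Z) ^ 2 ≤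
        h * (κ * c₄ * N * (infl N I (y k) * (Istar - infl N I (y k)))) - 2 * N * (h * Z) ^ 2 := by
      intro k hk
      have h2 := hle k (Finset.mem_range.1 hk)
      have h3 : 0 ≤ h * (κ * c₄ * N) * infl N I (y k) := by
        have := infl_nonneg I W.hI0 (y k)
        positivity
      have h4 := mul_le_mul_of_nonneg_left (by linarith : Istar - a ≤ Istar - infl N I (y k)) h3
      rw [hc1def]
      linarith
    refine le_trans ?_ (Finset.sum_le_sum h1)
    rw [Finset.sum_sub_distrib, ← Finset.mul_sum]
    have h5 : ∑ _k ∈ Finset.range n, 2 * (N : ℝ) * (h * Z) ^ 2 ≤ 1 := by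
      refine le_trans (le_of_eq ?_) hn2
      rw [Finset.sum_const, Finset.card_range, nsmul_eq_mul, hh]
      field_simp
    have h6 := mul_le_mul_of_nonneg_left hS hc1.le
    linarith

/-- Along true solutions, the influence is uniformly approximated by the Euler scheme on `[0, τ]`,
uniformly over all initial data. -/
lemma close (W : WData N ω κ I S Ωn Im Sm KI KS Istar c₄) (ε : ℝ) (hε : 0 < ε) (τ : ℕ) :
    ∀ᶠ n : ℕ in atTop, ∀ (θ0 : Fin N → ℝ) (θ : Fin N → ℝ → ℝ), IsGenWinfreeSol N ω κ I S θ0 θ →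
      ∀ k < n, |avgInfl N I θ (k * ((τ : ℝ) / n)) -
        infl N I ((eulerMap N ω κ I S ((τ : ℝ) / n))^[k] θ0)| ≤ ε := by
  have hκ := W.hκ
  have hImn := W.Im_nonneg
  have hSmn := W.Sm_nonneg
  have hKI := W.hKI
  have hKS := W.hKS
  have hM0 := W.speed_nonneg
  set K : ℝ := κ * (KI * Sm + Im * KS) with hKdef
  set M : ℝ := Ωn + κ * Im * Sm with hMdef
  have hK0 : 0 ≤ K := by positivity
  have hsmall : ∀ᶠ n : ℕ in atTop, KI * M * τ * Real.exp (K * τ) / n ≤ ε :=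
      (tendsto_const_div_atTop_nhds_zero_nat _).eventually_le_const hε
  filter_upwards [hsmall, eventually_gt_atTop 0] with n hn hn0 θ0 θ hθ k hk
  have hn0' : (0 : ℝ) < n := by exact_mod_cast hn0
  set h : ℝ := (τ : ℝ) / n with hh
  have hhpos : 0 ≤ h := by positivity
  have hder : ∀ t : ℝ, 0 ≤ t → HasDerivAt (fun s => fun j => θ j s)
      (wField N ω κ I S (fun j => θ j t)) t := fun t ht => hasDerivAt_pi.2 fun i => hθ.2 i t ht
  have h1 := euler_close (wField N ω κ I S) K M hK0 W.lip W.bound (fun s => fun j => θ j s) hder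
    h hhpos k
  have h0 : (fun j => θ j 0) = θ0 := funext hθ.1
  rw [h0] at h1
  have h2 := infl_lip W.hN I KI W.hI hKI (fun j => θ j (k * h)) ((eulerMap N ω κ I S h)^[k] θ0)
  have h3 : (1 + h * K) ^ k ≤ Real.exp (K * τ) := by
    calc (1 + h * K) ^ k ≤ Real.exp (h * K) ^ k := by
          gcongr
          linarith [Real.add_one_le_exp (h * K)]
      _ = Real.exp (k * (h * K)) := (Real.exp_nat_mul _ _).symm
      _ ≤ Real.exp (K * τ) := by
          apply Real.exp_le_exp.2
          have h4 : (k : ℝ) * h ≤ τ := by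
            have : (k : ℝ) ≤ n := by exact_mod_cast hk.le
            calc (k : ℝ) * h ≤ n * h := by gcongr
              _ = τ := by rw [hh]; field_simp
          calc (k : ℝ) * (h * K) = K * (k * h) := by ring
            _ ≤ _ := by gcongr
  calc |avgInfl N I θ (k * h) - infl N I ((eulerMap N ω κ I S h)^[k] θ0)|
      ≤ KI * (M * h * ((1 + h * K) ^ k - 1)) := h2.trans (by gcongr; exact h1)
    _ ≤ KI * (M * h * Real.exp (K * τ)) := by gcongr; linarith
    _ = KI * M * τ * Real.exp (K * τ) / n := by rw [hh]; ring
    _ ≤ ε := hn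

/-- Bounded sets of initial data whose influence stays in `[δ, a]`, `0 < δ`, `a < I*`, are null. -/
lemma null_of_lower (W : WData N ω κ I S Ωn Im Sm KI KS Istar c₄) (a δ L : ℝ) (ha : a < Istar)
    (hδ : 0 < δ) (hL : 0 ≤ L) :
    volume {θ0 : Fin N → ℝ | θ0 ∈ Metric.closedBall 0 L ∧ ∃ θ, IsGenWinfreeSol N ω κ I S θ0 θ ∧
      ∀ t, 0 ≤ t → δ ≤ avgInfl N I θ t ∧ avgInfl N I θ t ≤ a} = 0 := by
  refine W.null ((a + Istar) / 2) (δ / 2) 0 L (by linarith) (by linarith) hL _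
    (fun x hx => hx.1) fun τ hτ => ?_
  filter_upwards [W.close (min ((Istar - a) / 2) (δ / 2)) (lt_min (by linarith) (by linarith)) τ,
    eventually_gt_atTop 0] with n hn hn0 x hx
  have hn0' : (0 : ℝ) < n := by exact_mod_cast hn0
  obtain ⟨-, θ, hθ, hR⟩ := hx
  have key : ∀ k < n, δ / 2 ≤ infl N I ((eulerMap N ω κ I S ((τ : ℝ) / n))^[k] x) ∧
      infl N I ((eulerMap N ω κ I S ((τ : ℝ) / n))^[k] x) ≤ (a + Istar) / 2 := by
    intro k hk
    have h1 := abs_le.1 (hn x θ hθ k hk)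
    have h2 := hR (k * ((τ : ℝ) / n)) (by positivity)
    have h3 := min_le_left ((Istar - a) / 2) (δ / 2)
    have h4 := min_le_right ((Istar - a) / 2) (δ / 2)
    constructor <;> linarith [h1.1, h1.2, h2.1, h2.2]
  refine ⟨fun k hk => (key k hk).2, ?_⟩
  calc δ / 2 * τ - 0 = ∑ _k ∈ Finset.range n, ((τ : ℝ) / n) * (δ / 2) := by
        rw [Finset.sum_const, Finset.card_range, nsmul_eq_mul]; field_simp; ring
    _ ≤ _ := Finset.sum_le_sum fun k hk =>
        mul_le_mul_of_nonneg_left (key k (Finset.mem_range.1 hk)).1 (by positivity)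

/-- If some oscillator has a nonzero frequency, then bounded sets of initial data whose influence
stays below `a < I*` are null. The lower bound on the accumulated influence is obtained by
evaluating a bounded primitive `P` of `I - Ib`, `Ib > 0`, along the Euler orbit of that oscillator:
when the total influence is small the oscillator rotates almost freely, and its own contribution
to the influence averages to about `Ib`. -/
lemma null_of_freq_ne (W : WData N ω κ I S Ωn Im Sm KI KS Istar c₄) (a L : ℝ) (ha : a < Istar)
    (hL : 0 ≤ L) (i : Fin N) (hi : ω i ≠ 0) (P : ℝ → ℝ) (Ib Pm : ℝ) (hIb : 0 < Ib)
    (hP : ∀ x, HasDerivAt P (I x - Ib) x) (hPm : ∀ x, |P x| ≤ Pm) :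
    volume {θ0 : Fin N → ℝ | θ0 ∈ Metric.closedBall 0 L ∧ ∃ θ, IsGenWinfreeSol N ω κ I S θ0 θ ∧
      ∀ t, 0 ≤ t → avgInfl N I θ t ≤ a} = 0 := by
  have hN := W.hN
  have hNpos : (0 : ℝ) < N := by exact_mod_cast hN
  have hκ := W.hκ
  have hImn := W.Im_nonneg
  have hSmn := W.Sm_nonneg
  have hKI := W.hKI
  have hM0 := W.speed_nonneg
  set M : ℝ := Ωn + κ * Im * Sm with hMdef
  have hωpos : 0 < |ω i| := abs_pos.2 hi
  set C1 : ℝ := |ω i| * N + (Im + Ib) * κ * Sm with hC1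
  have hC1pos : 0 < C1 := by positivity
  obtain ⟨σ, hσ1, hσ2⟩ : ∃ σ : ℝ, |σ| = 1 ∧ σ * ω i = |ω i| := by
    rcases lt_or_gt_of_ne hi with h | h
    · exact ⟨-1, by simp, by rw [abs_of_neg h]; ring⟩
    · exact ⟨1, by simp, by rw [abs_of_pos h]; ring⟩
  have hstep : ∀ h : ℝ, 0 ≤ h → ∀ x : Fin N → ℝ,
      h * |ω i| * Ib + (σ * P (eulerMap N ω κ I S h x i) - σ * P (x i)) - KI * (h * M) ^ 2 ≤
        C1 * (h * infl N I x) := by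
    intro h hh x
    set R := infl N I x with hR
    have hR0 : 0 ≤ R := infl_nonneg I W.hI0 x
    set y := eulerMap N ω κ I S h x i with hy
    have hyx : y - x i = h * (ω i + κ * R * S (x i)) := by
      simp [hy, eulerMap, wField_apply hN, hR]
    have hyx' : |y - x i| ≤ h * M := by
      have h1 := (norm_le_pi_norm (wField N ω κ I S x) i).trans (W.bound x)
      rw [wField_apply hN, Real.norm_eq_abs] at h1
      rw [hyx, abs_mul, abs_of_nonneg hh]
      gcongr
    -- second-order Taylor remainder of `P`
    have htay : |P y - P (x i) - (I (x i) - Ib) * (y - x i)| ≤ KI * (h * M) ^ 2 := by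
      have h1 := (convex_segment (𝕜 := ℝ) (x i) y).norm_image_sub_le_of_norm_hasDerivWithin_le
        (f := fun s => P s - (I (x i) - Ib) * s) (f' := fun s => I s - I (x i))
        (C := KI * (h * M)) (fun s _ => by
          have h2 := ((hP s).fun_sub ((hasDerivAt_id' s).const_mul (I (x i) - Ib)))
          refine (h2.congr_deriv ?_).hasDerivWithinAt
          ring) (fun s hs => by
          have h3 : |s - x i| ≤ |y - x i| := by
            have := norm_sub_le_of_mem_segment hs
            simpa [Real.norm_eq_abs] using this
          exact (W.hI _ _).trans (mul_le_mul_of_nonneg_left (h3.trans hyx') hKI))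
        (left_mem_segment ℝ (x i) y) (right_mem_segment ℝ (x i) y)
      simp only [Real.norm_eq_abs] at h1
      have h4 : P y - P (x i) - (I (x i) - Ib) * (y - x i) =
        P y - (I (x i) - Ib) * y - (P (x i) - (I (x i) - Ib) * x i) := by ring
      rw [h4]
      refine h1.trans ?_
      have : KI * (h * M) * |y - x i| ≤ KI * (h * M) * (h * M) := by gcongr
      linarith
    set e := P y - P (x i) - (I (x i) - Ib) * (y - x i) with he
    have he2 : σ * e ≤ KI * (h * M) ^ 2 := by
      refine (le_abs_self _).trans ?_
      rw [abs_mul, hσ1, one_mul]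
      exact htay
    have h5 : σ * ((I (x i) - Ib) * S (x i)) ≤ (Im + Ib) * Sm := by
      refine (le_abs_self _).trans ?_
      rw [abs_mul, hσ1, one_mul, abs_mul]
      have h6 : |I (x i) - Ib| ≤ Im + Ib := by
        rw [abs_le]; constructor <;> linarith [W.hI0 (x i), W.hIm (x i)]
      have h7 := W.hSm (x i)
      gcongr
    have h8 : σ * P y - σ * P (x i) = h * |ω i| * I (x i) - h * |ω i| * Ib +
        h * κ * R * (σ * ((I (x i) - Ib) * S (x i))) + σ * e := by
      rw [he, hyx, ← hσ2]; ring
    have h9 : h * κ * R * (σ * ((I (x i) - Ib) * S (x i))) ≤ h * κ * R * ((Im + Ib) * Sm) := by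
      gcongr
    have h10 : h * |ω i| * I (x i) ≤ h * |ω i| * (N * R) := by
      have := le_infl hN I W.hI0 x i
      gcongr
    rw [h8, hC1]
    linarith
  refine W.null ((a + Istar) / 2) (|ω i| * Ib / C1) ((2 * Pm + 1) / C1) L (by linarith)
    (by positivity) hL _ (fun x hx => hx.1) fun τ hτ => ?_
  have hsmall : ∀ᶠ n : ℕ in atTop, KI * M ^ 2 * (τ : ℝ) ^ 2 / n ≤ 1 :=
      (tendsto_const_div_atTop_nhds_zero_nat _).eventually_le_const one_pos
  filter_upwards [W.close ((Istar - a) / 2) (by linarith) τ, hsmall,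
    eventually_gt_atTop 0] with n hn hn1 hn0 x hx
  have hn0' : (0 : ℝ) < n := by exact_mod_cast hn0
  obtain ⟨-, θ, hθ, hR⟩ := hx
  constructor
  · intro k hk
    have h1 := abs_le.1 (hn x θ hθ k hk)
    have h2 := hR (k * ((τ : ℝ) / n)) (by positivity)
    linarith [h1.1, h1.2]
  · set h : ℝ := (τ : ℝ) / n with hh
    have hhpos : 0 ≤ h := by positivity
    set y : ℕ → Fin N → ℝ := fun k => (eulerMap N ω κ I S h)^[k] x with hy
    have h1 : ∀ k ∈ Finset.range n,
        h * |ω i| * Ib - KI * (h * M) ^ 2 + (σ * P (y (k + 1) i) - σ * P (y k i)) ≤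
        C1 * (h * infl N I (y k)) := by
      intro k _
      have := hstep h hhpos (y k)
      have h2 : y (k + 1) = eulerMap N ω κ I S h (y k) := Function.iterate_succ_apply' _ _ _
      rw [h2]
      linarith
    have h2 := Finset.sum_le_sum h1
    rw [Finset.sum_add_distrib, Finset.sum_range_sub (fun k => σ * P (y k i)),
      Finset.sum_const, Finset.card_range, nsmul_eq_mul, ← Finset.mul_sum] at h2
    have h3 : ∀ z, |σ * P z| ≤ Pm := fun z => by rw [abs_mul, hσ1, one_mul]; exact hPm z
    have h4 := abs_le.1 (h3 (y n i))
    have h5 := abs_le.1 (h3 (y 0 i))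
    have h6 : (n : ℝ) * (h * |ω i| * Ib - KI * (h * M) ^ 2) =
        τ * |ω i| * Ib - KI * M ^ 2 * (τ : ℝ) ^ 2 / n := by
      rw [hh]; field_simp
    rw [h6] at h2
    have h7 : |ω i| * Ib / C1 * τ - (2 * Pm + 1) / C1 = (τ * |ω i| * Ib - (2 * Pm + 1)) / C1 := by
      ring
    rw [h7, div_le_iff₀ hC1pos]
    linarith [h4.1, h5.2]

end WData

/-- A continuous `2π`-periodic function that is positive inside a period has positive mean `Ib`,
and `I - Ib` has a bounded primitive. -/
lemma exists_primitive (I : ℝ → ℝ) (hper : Function.Periodic I (2 * Real.pi))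
    (hcont : Continuous I) (hpos : ∀ x ∈ Set.Ioo (-Real.pi) Real.pi, 0 < I x) :
    ∃ (P : ℝ → ℝ) (Ib Pm : ℝ), 0 < Ib ∧ (∀ x, HasDerivAt P (I x - Ib) x) ∧ ∀ x, |P x| ≤ Pm := by
  have hpi := Real.pi_pos
  have hint : 0 < ∫ s in (-Real.pi)..Real.pi, I s :=
    intervalIntegral.intervalIntegral_pos_of_pos_on (hcont.intervalIntegrable _ _) hpos
      (by linarith)
  set Ib : ℝ := (2 * Real.pi)⁻¹ * ∫ s in (-Real.pi)..Real.pi, I s with hIb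
  have hc : Continuous fun s => I s - Ib := hcont.sub continuous_const
  let P : ℝ → ℝ := fun x => ∫ s in (0 : ℝ)..x, (I s - Ib)
  have hP : ∀ x, HasDerivAt P (I x - Ib) x := fun x =>
    intervalIntegral.integral_hasDerivAt_right (hc.intervalIntegrable _ _)
      hc.aestronglyMeasurable.stronglyMeasurableAtFilter hc.continuousAt
  have hPper : Function.Periodic P (2 * Real.pi) := by
    intro x
    have hperc : Function.Periodic (fun s => I s - Ib) (2 * Real.pi) := fun s => by
      simp only [hper s]
    have h1 : P x + ∫ s in x..(x + 2 * Real.pi), (I s - Ib) = P (x + 2 * Real.pi) :=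
      intervalIntegral.integral_add_adjacent_intervals (hc.intervalIntegrable _ _)
        (hc.intervalIntegrable _ _)
    have h2 := hperc.intervalIntegral_add_eq x (-Real.pi)
    have h3 : -Real.pi + 2 * Real.pi = Real.pi := by ring
    have h4 : ∫ s in (-Real.pi)..Real.pi, (I s - Ib) = 0 := by
      rw [intervalIntegral.integral_sub (hcont.intervalIntegrable _ _)
        (continuous_const.intervalIntegrable _ _), intervalIntegral.integral_const, hIb, smul_eq_mul]
      field_simp
      ring
    rw [h3, h4] at h2
    linarith
  have hPcont : Continuous P := continuous_iff_continuousAt.2 fun x => (hP x).continuousAt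
  obtain ⟨Pm, hPm⟩ := (hPper.isBounded_of_continuous (by positivity) hPcont).exists_norm_le
  exact ⟨P, Ib, Pm, by positivity, hP, fun x => hPm _ ⟨x, rfl⟩⟩

/-! ### Barriers -/

/-- A differentiable function that is pushed back towards `0` whenever it reaches `±b` cannot leave
`[-b, b]`. -/
lemma barrier (x x' : ℝ → ℝ) (T0 T1 b : ℝ) (hb0 : 0 < b)
    (hx : ∀ t ∈ Set.Icc T0 T1, HasDerivAt x (x' t) t) (h0 : |x T0| ≤ b)
    (hb : ∀ t ∈ Set.Ico T0 T1, |x t| = b → x' t * x t < 0) :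
    ∀ t ∈ Set.Icc T0 T1, |x t| ≤ b := by
  have h0' := abs_le.1 h0
  have hc : ContinuousOn x (Set.Icc T0 T1) := fun t ht => (hx t ht).continuousAt.continuousWithinAt
  have h1 := image_le_of_deriv_right_lt_deriv_boundary hc
    (fun t ht => (hx t ⟨ht.1, ht.2.le⟩).hasDerivWithinAt) (B := fun _ => b) (B' := fun _ => 0)
    h0'.2 (fun _ => hasDerivAt_const _ _) (fun t ht hxt => by
      have h2 := hb t ht (by rw [hxt, abs_of_pos hb0])
      rw [hxt] at h2
      nlinarith)
  have h3 := image_le_of_deriv_right_lt_deriv_boundary hc.neg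
    (fun t ht => (hx t ⟨ht.1, ht.2.le⟩).neg.hasDerivWithinAt) (B := fun _ => b) (B' := fun _ => 0)
    (by simp only [Pi.neg_apply]; linarith [h0'.1]) (fun _ => hasDerivAt_const _ _)
    (fun t ht hxt => by
      simp only [Pi.neg_apply] at hxt
      have h2 := hb t ht (by rw [← hxt, abs_of_neg (by linarith)])
      have h4 : x t = -b := by linarith
      rw [h4] at h2
      nlinarith)
  intro t ht
  have h4 := h1 ht
  have h5 := h3 ht
  simp only [Pi.neg_apply] at h4 h5
  exact abs_le.2 ⟨by linarith, h4⟩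

/-- If every interval `[2πk - β, 2πk + β]` is forward invariant, the phase is eventually confined
either to one of them or to one of the gaps between them. -/
lemma osc_of_barrier (x x' : ℝ → ℝ) (t0 β : ℝ) (hβ0 : 0 < β) (hβ : β < Real.pi)
    (hx : ∀ t, t0 ≤ t → HasDerivAt x (x' t) t)
    (hb : ∀ t, t0 ≤ t → ∀ k : ℤ, |x t - k * (2 * Real.pi)| = β →
      x' t * (x t - k * (2 * Real.pi)) < 0) :
    IsBoundedUnder (· ≤ ·) atTop x ∧ IsBoundedUnder (· ≥ ·) atTop x ∧
      limsup x atTop - liminf x atTop < 2 * Real.pi := by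
  have hpi := Real.pi_pos
  suffices h : ∃ l u t1 : ℝ, u - l < 2 * Real.pi ∧ ∀ t, t1 ≤ t → l ≤ x t ∧ x t ≤ u by
    obtain ⟨l, u, t1, hlu, h⟩ := h
    have hu : ∀ᶠ t in atTop, x t ≤ u := (eventually_ge_atTop t1).mono fun t ht => (h t ht).2
    have hl : ∀ᶠ t in atTop, l ≤ x t := (eventually_ge_atTop t1).mono fun t ht => (h t ht).1
    have h1 : IsBoundedUnder (· ≤ ·) atTop x := ⟨u, by simpa using hu⟩
    have h2 : IsBoundedUnder (· ≥ ·) atTop x := ⟨l, by simpa using hl⟩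
    refine ⟨h1, h2, ?_⟩
    have h3 : limsup x atTop ≤ u := limsup_le_of_le h2.isCoboundedUnder_le hu
    have h4 : l ≤ liminf x atTop := le_liminf_of_le h1.isCoboundedUnder_ge hl
    linarith
  by_cases hcase : ∃ t1, t0 ≤ t1 ∧ ∃ k : ℤ, |x t1 - k * (2 * Real.pi)| ≤ β
  · obtain ⟨t1, ht1, k, hk⟩ := hcase
    refine ⟨k * (2 * Real.pi) - β, k * (2 * Real.pi) + β, t1, by linarith, fun t ht => ?_⟩
    have := abs_le.1 (barrier (fun s => x s - k * (2 * Real.pi)) x' t1 t β hβ0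
      (fun s hs => (hx s (ht1.trans hs.1)).sub_const _) hk
      (fun s hs => hb s (ht1.trans hs.1) k) t ⟨ht, le_rfl⟩)
    constructor <;> linarith [this.1, this.2]
  · push Not at hcase
    obtain ⟨k, hk⟩ : ∃ k : ℤ, k * (2 * Real.pi) ≤ x t0 ∧ x t0 < (k + 1) * (2 * Real.pi) := by
      refine ⟨⌊x t0 / (2 * Real.pi)⌋, ?_, ?_⟩
      · rw [← le_div_iff₀ (by positivity)]; exact Int.floor_le _
      · rw [← div_lt_iff₀ (by positivity)]; exact Int.lt_floor_add_one _
    have h1 : k * (2 * Real.pi) + β < x t0 := by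
      have := hcase t0 le_rfl k
      rw [abs_of_nonneg (by linarith)] at this
      linarith
    have h2 : x t0 < (k + 1) * (2 * Real.pi) - β := by
      have := hcase t0 le_rfl (k + 1)
      push_cast at this
      rw [abs_of_neg (by linarith)] at this
      linarith
    refine ⟨k * (2 * Real.pi) + β, (k + 1) * (2 * Real.pi) - β, t0, by linarith, fun t ht => ?_⟩
    have hc : ContinuousOn x (Set.Icc t0 t) :=
      fun s hs => (hx s hs.1).continuousAt.continuousWithinAt
    constructor
    · by_contra! hlt
      obtain ⟨s, hs, hs'⟩ := intermediate_value_Icc' ht hc ⟨hlt.le, h1.le⟩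
      have := hcase s hs.1 k
      rw [hs', add_sub_cancel_left, abs_of_pos hβ0] at this
      exact lt_irrefl _ this
    · by_contra! hlt
      obtain ⟨s, hs, hs'⟩ := intermediate_value_Icc ht hc ⟨h2.le, hlt.le⟩
      have := hcase s hs.1 (k + 1)
      push_cast at this
      rw [hs', sub_sub_cancel_left, abs_neg, abs_of_pos hβ0] at this
      exact lt_irrefl _ this

/-! ### Trapping -/

/-- Signed form of (C1): `S` points towards `0` with strength at least `c₁ (π - β) ^ p`. -/
lemma StructC.S_mul_le {I S : ℝ → ℝ} {α₀ p q c₁ c₂ c₃ : ℝ} (h : StructC I S α₀ p q c₁ c₂ c₃)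
    {β x : ℝ} (hβ : β < Real.pi) (hx1 : α₀ ≤ |x|) (hx2 : |x| ≤ β) :
    S x * x ≤ -(c₁ * (Real.pi - β) ^ p) * |x| := by
  obtain ⟨hα, hp, hq, hc1, hc2, hc3, hC1, hC1', hC2, hC3⟩ := h
  have hpow : (Real.pi - β) ^ p ≤ (Real.pi - |x|) ^ p :=
    Real.rpow_le_rpow (by linarith) (by linarith) (by linarith)
  have hpow' := mul_le_mul_of_nonneg_left hpow hc1.le
  rcases le_total 0 x with h0 | h0
  · rw [abs_of_nonneg h0] at *
    have := hC1 x ⟨hx1, by linarith⟩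
    exact mul_le_mul_of_nonneg_right (by linarith) h0
  · rw [abs_of_nonpos h0] at *
    have h1 := hC1' x ⟨by linarith, by linarith⟩
    have h2 : Real.pi - -x = x + Real.pi := by ring
    rw [h2] at hpow'
    nlinarith

/-- If the influence is at least `ρ`, the vector field pushes inwards at every phase of modulus in
`[α₀, β]`. -/
lemma StructC.push {I S : ℝ → ℝ} {α₀ p q c₁ c₂ c₃ : ℝ} (h : StructC I S α₀ p q c₁ c₂ c₃)
    {β x w Ωn κ R ρ : ℝ} (hβ : β < Real.pi) (hx1 : α₀ ≤ |x|) (hx2 : |x| ≤ β) (hκ : 0 < κ)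
    (hw : |w| ≤ Ωn) (hR : ρ ≤ R) (hρ : 0 ≤ ρ) (hΩ : Ωn < κ * ρ * (c₁ * (Real.pi - β) ^ p)) :
    (w + κ * R * S x) * x < 0 := by
  have h1 := h.S_mul_le hβ hx1 hx2
  have hxpos : 0 < |x| := h.1.1.trans_le hx1
  have hs : 0 ≤ c₁ * (Real.pi - β) ^ p :=
    mul_nonneg h.2.2.2.1.le (Real.rpow_nonneg (by linarith) _)
  have h2 : w * x ≤ Ωn * |x| := by
    refine (le_abs_self _).trans ?_
    rw [abs_mul]; gcongr
  have h3 : κ * R * (S x * x) ≤ κ * R * (-(c₁ * (Real.pi - β) ^ p) * |x|) :=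
    mul_le_mul_of_nonneg_left h1 (mul_nonneg hκ.le (hρ.trans hR))
  have h4 : κ * ρ * (c₁ * (Real.pi - β) ^ p * |x|) ≤ κ * R * (c₁ * (Real.pi - β) ^ p * |x|) := by
    gcongr
  have h5 := mul_lt_mul_of_pos_right hΩ hxpos
  linarith

lemma exists_shift (y : ℝ) : ∃ k : ℤ, |y - k * (2 * Real.pi)| ≤ Real.pi := by
  have hpi := Real.pi_pos
  refine ⟨round (y / (2 * Real.pi)), ?_⟩
  have h1 := abs_sub_round (y / (2 * Real.pi))
  have h2 : y - round (y / (2 * Real.pi)) * (2 * Real.pi) =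
      (y / (2 * Real.pi) - round (y / (2 * Real.pi))) * (2 * Real.pi) := by field_simp
  rw [h2, abs_mul, abs_of_pos (by positivity : 0 < 2 * Real.pi)]
  nlinarith

lemma IsGenWinfreeSol.deriv_eq {N : ℕ} (hN : 1 ≤ N) {ω : Fin N → ℝ} {κ : ℝ} {I S : ℝ → ℝ}
    {θ0 : Fin N → ℝ} {θ : Fin N → ℝ → ℝ} (h : IsGenWinfreeSol N ω κ I S θ0 θ) (i : Fin N)
    (t : ℝ) (ht : 0 ≤ t) : HasDerivAt (θ i) (ω i + κ * avgInfl N I θ t * S (θ i t)) t := by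
  have hNpos : (0 : ℝ) < N := by exact_mod_cast hN
  refine (h.2 i t ht).congr_deriv ?_
  rw [avgInfl]; field_simp

/-- Phase-locking core: if the influence is at least `a` at time `t0`, then the oscillators with
phase in `[-β, β]` at time `t0` are trapped (each at its own level), and they alone keep the
influence above `c₃ a (N + 1) / (2N)`, which in turn keeps them trapped. -/
lemma influence_persists {N : ℕ} (hN : 1 ≤ N) {ω : Fin N → ℝ} {κ : ℝ} {I S : ℝ → ℝ}
    {α₀ p q c₁ c₂ c₃ : ℝ} (hSt : StructC I S α₀ p q c₁ c₂ c₃) (hκ : 0 < κ)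
    (hI0 : ∀ x, 0 ≤ I x) (hIc : Continuous I)
    (hIper : Function.Periodic I (2 * Real.pi)) (hSper : Function.Periodic S (2 * Real.pi))
    {Ωn : ℝ} (hω : ∀ i, |ω i| ≤ Ωn) {a β : ℝ} (ha : 0 < a)
    (hβ : β < Real.pi) (hβα : α₀ ≤ β) (hβa : Real.pi - (a / (2 * c₂)) ^ (1 / q) ≤ β)
    (hΩ : Ωn < κ * (c₃ * a / 2) * (c₁ * (Real.pi - β) ^ p))
    {θ0 : Fin N → ℝ} {θ : Fin N → ℝ → ℝ} (hθ : IsGenWinfreeSol N ω κ I S θ0 θ)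
    {t0 : ℝ} (ht0 : 0 ≤ t0) (hR0 : a ≤ avgInfl N I θ t0) :
    ∀ t, t0 ≤ t → c₃ * a * (N + 1) / (2 * N) ≤ avgInfl N I θ t := by
  have hNpos : (0 : ℝ) < N := by exact_mod_cast hN
  obtain ⟨hα, hp, hq, hc1, hc2, hc3, -, -, hC2, hC3⟩ := id hSt
  choose k hk using fun i => exists_shift (θ i t0)
  let φ : Fin N → ℝ → ℝ := fun i t => θ i t - k i * (2 * Real.pi)
  have hIφ : ∀ i t, I (φ i t) = I (θ i t) := fun i t => hIper.sub_int_mul_eq (k i)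
  have hSφ : ∀ i t, S (φ i t) = S (θ i t) := fun i t => hSper.sub_int_mul_eq (k i)
  have hder : ∀ i t, 0 ≤ t → HasDerivAt (φ i) (ω i + κ * avgInfl N I θ t * S (φ i t)) t := by
    intro i t ht
    rw [hSφ]
    exact (hθ.deriv_eq hN i t ht).sub_const _
  have hRφ : ∀ t, ∑ i, I (φ i t) = N * avgInfl N I θ t := by
    intro t
    simp only [hIφ, avgInfl]
    field_simp
  classical
  let B : Finset (Fin N) := Finset.univ.filter fun i => |φ i t0| ≤ β
  have hmemB : ∀ i, i ∈ B ↔ |φ i t0| ≤ β := fun i => by simp [B]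
  -- `β` is chosen so that, by (C2), an oscillator outside `[-β, β]` has influence at most `a / 2`
  have hout : ∀ i ∉ B, I (φ i t0) ≤ a / 2 := by
    intro i hi
    rw [hmemB, not_le] at hi
    have h1 := (hC2 (φ i t0) (abs_le.1 (hk i))).2
    have h2 : (Real.pi - |φ i t0|) ^ q ≤ ((a / (2 * c₂)) ^ (1 / q)) ^ q :=
      Real.rpow_le_rpow (by have := hk i; simp only [φ]; linarith) (by linarith) (by linarith)
    rw [← Real.rpow_mul (by positivity), one_div_mul_cancel (by linarith), Real.rpow_one] at h2
    have h3 := mul_le_mul_of_nonneg_left h2 hc2.le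
    have h4 : c₂ * (a / (2 * c₂)) = a / 2 := by field_simp
    linarith
  have hsplit : ∑ i ∈ B, I (φ i t0) + ∑ i ∈ Bᶜ, I (φ i t0) = N * avgInfl N I θ t0 := by
    rw [Finset.sum_add_sum_compl, hRφ]
  have hcompl : ∑ i ∈ Bᶜ, I (φ i t0) ≤ (N - B.card) * (a / 2) := by
    have h1 : ∑ i ∈ Bᶜ, I (φ i t0) ≤ ∑ _i ∈ Bᶜ, a / 2 :=
      Finset.sum_le_sum fun i hi => hout i (Finset.mem_compl.1 hi)
    rw [Finset.sum_const, Finset.card_compl, Fintype.card_fin, nsmul_eq_mul,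
      Nat.cast_sub (by simpa using Finset.card_le_univ B)] at h1
    exact h1
  have hNa : N * a ≤ N * avgInfl N I θ t0 := by gcongr
  -- a nonempty `B` gains the factor `(N + 1) / N` over the crude bound `a / 2`
  have hcard : (1 : ℝ) ≤ B.card := by
    have : B.Nonempty := by
      rw [Finset.nonempty_iff_ne_empty]
      intro hB
      rw [hB] at hsplit hcompl
      simp only [Finset.sum_empty, Finset.card_empty, Nat.cast_zero] at hsplit hcompl
      nlinarith
    exact_mod_cast this.card_pos
  have hsumB : (N + 1) * a / 2 ≤ ∑ i ∈ B, I (φ i t0) := by nlinarith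
  let b : Fin N → ℝ := fun i => max |φ i t0| α₀
  have hbβ : ∀ i ∈ B, b i ≤ β := fun i hi => max_le ((hmemB i).1 hi) hβα
  have hbα : ∀ i, α₀ ≤ b i := fun i => le_max_right _ _
  have hlow : ∀ t, (∀ i ∈ B, |φ i t| ≤ b i) → c₃ * a * (N + 1) / (2 * N) ≤ avgInfl N I θ t := by
    intro t ht
    have h1 : ∑ i ∈ B, c₃ * I (φ i t0) ≤ ∑ i ∈ B, I (φ i t) :=
      Finset.sum_le_sum fun i hi => hC3 (φ i t0) (abs_le.1 (hk i)) _ (ht i hi)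
    have h2 : ∑ i ∈ B, I (φ i t) ≤ ∑ i, I (φ i t) :=
      Finset.sum_le_sum_of_subset_of_nonneg (Finset.subset_univ _) fun _ _ _ => hI0 _
    rw [← Finset.mul_sum] at h1
    rw [hRφ] at h2
    have h3 := mul_le_mul_of_nonneg_left hsumB hc3.1.le
    rw [div_le_iff₀ (by positivity)]
    linarith
  have hgap : c₃ * a / 2 < c₃ * a * (N + 1) / (2 * N) := by
    have := mul_pos hc3.1 ha
    rw [div_lt_div_iff₀ two_pos (by positivity)]
    nlinarith
  have hφcont : ∀ i t, 0 ≤ t → ContinuousAt (φ i) t := fun i t ht => (hder i t ht).continuousAt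
  have hRcont : ∀ t, 0 ≤ t → ContinuousAt (avgInfl N I θ) t := by
    intro t ht
    unfold avgInfl
    refine continuousAt_const.mul (tendsto_finsetSum _ fun i _ => ?_)
    exact hIc.continuousAt.comp (hθ.deriv_eq hN i t ht).continuousAt
  -- Continuity induction on `[t0, T]`: the set of times at which all of `B` is still trapped is
  -- closed, and open to the right because the strict gap keeps the influence above `c₃ a / 2`.
  intro T hT
  let s : Set ℝ := (fun t => fun i => |φ i t|) ⁻¹' {v | ∀ i ∈ B, v i ≤ b i}
  have hclosed : IsClosed (s ∩ Set.Icc t0 T) := by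
    rw [Set.inter_comm]
    refine ContinuousOn.preimage_isClosed_of_isClosed ?_ isClosed_Icc ?_
    · refine continuousOn_pi.2 fun i t ht => ?_
      exact (hφcont i t (ht0.trans ht.1)).abs.continuousWithinAt
    · have : {v : Fin N → ℝ | ∀ i ∈ B, v i ≤ b i} = ⋂ i ∈ B, {v | v i ≤ b i} := by
        ext; simp
      rw [this]
      exact isClosed_biInter fun i _ => isClosed_le (continuous_apply i) continuous_const
  have hsub := hclosed.Icc_subset_of_forall_exists_gt (fun i _ => le_max_left _ _) (by
    intro t ht y hy
    have htnn : 0 ≤ t := ht0.trans ht.2.1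
    have h1 : c₃ * a / 2 < avgInfl N I θ t := hgap.trans_le (hlow t ht.1)
    obtain ⟨ε, hε, hball⟩ := Metric.eventually_nhds_iff.1
      ((hRcont t htnn).eventually (lt_mem_nhds h1))
    have hty : t < min y (t + ε / 2) := lt_min hy (by linarith)
    refine ⟨min y (t + ε / 2), fun i hi => ?_, hty, min_le_left _ _⟩
    refine barrier (φ i) (fun u => ω i + κ * avgInfl N I θ u * S (φ i u)) t (min y (t + ε / 2))
      (b i) (hα.1.trans_le (hbα i)) (fun u hu => hder i u (htnn.trans hu.1)) (ht.1 i hi)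
      (fun u hu hub => ?_) _ ⟨hty.le, le_rfl⟩
    have hRu : c₃ * a / 2 < avgInfl N I θ u := by
      apply hball
      rw [Real.dist_eq, abs_of_nonneg (by linarith [hu.1])]
      linarith [hu.2.trans_le (min_le_right y (t + ε / 2))]
    exact hSt.push hβ (by rw [hub]; exact hbα i) (by rw [hub]; exact hbβ i hi) hκ (hω i) hRu.le
      (by have := hc3.1; positivity) hΩ)
  exact hlow T (hsub ⟨hT, le_rfl⟩)

/-- When all frequencies vanish, an oscillator that does not start at `π` modulo `2π` stays away
from `π`, so the influence is bounded below along the whole solution. -/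
lemma lower_of_freq_zero {N : ℕ} (hN : 1 ≤ N) {ω : Fin N → ℝ} {κ : ℝ} {I S : ℝ → ℝ}
    {α₀ p q c₁ c₂ c₃ : ℝ} (hSt : StructC I S α₀ p q c₁ c₂ c₃) (hκ : 0 < κ)
    (hI0 : ∀ x, 0 ≤ I x) (hIpos : ∀ x ∈ Set.Ioo (-Real.pi) Real.pi, 0 < I x)
    (hIper : Function.Periodic I (2 * Real.pi)) (hSper : Function.Periodic S (2 * Real.pi))
    (i : Fin N) (hω : ω i = 0)
    {θ0 : Fin N → ℝ} {θ : Fin N → ℝ → ℝ} (hθ : IsGenWinfreeSol N ω κ I S θ0 θ)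
    (hne : ∀ k : ℤ, θ0 i ≠ Real.pi + k * (2 * Real.pi)) :
    ∃ δ, 0 < δ ∧ ∀ t, 0 ≤ t → δ ≤ avgInfl N I θ t := by
  have hNpos : (0 : ℝ) < N := by exact_mod_cast hN
  obtain ⟨hα, hp, hq, hc1, hc2, hc3, -, -, hC2, hC3⟩ := id hSt
  obtain ⟨k, hk⟩ := exists_shift (θ i 0)
  let φ : ℝ → ℝ := fun t => θ i t - k * (2 * Real.pi)
  have hIφ : ∀ t, I (φ t) = I (θ i t) := fun t => hIper.sub_int_mul_eq k
  have hSφ : ∀ t, S (φ t) = S (θ i t) := fun t => hSper.sub_int_mul_eq k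
  have hder : ∀ t, 0 ≤ t → HasDerivAt φ (0 + κ * avgInfl N I θ t * S (φ t)) t := by
    intro t ht
    rw [hSφ, ← hω]
    exact (hθ.deriv_eq hN i t ht).sub_const _
  have hφ0 : |φ 0| < Real.pi := by
    refine lt_of_le_of_ne hk fun h => ?_
    rcases (abs_eq Real.pi_pos.le).1 h with h | h
    · apply hne k
      rw [← hθ.1 i]
      linarith
    · apply hne (k - 1)
      rw [← hθ.1 i]
      push_cast
      linarith
  set b := max |φ 0| α₀ with hb
  have hbpi : b < Real.pi := max_lt hφ0 hα.2
  have hbα : α₀ ≤ b := le_max_right _ _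
  have hRφ : ∀ t, I (φ t) ≤ N * avgInfl N I θ t := fun t => by
    rw [hIφ]; exact le_infl hN I hI0 (fun j => θ j t) i
  refine ⟨c₃ * I (φ 0) / N, div_pos (mul_pos hc3.1 (hIpos _ (abs_lt.1 hφ0))) hNpos,
    fun t ht => ?_⟩
  have h1 := barrier φ (fun u => 0 + κ * avgInfl N I θ u * S (φ u)) 0 t b (hα.1.trans_le hbα)
    (fun u hu => hder u hu.1) (le_max_left _ _) (fun u hu hub => by
      have hRpos : 0 < avgInfl N I θ u := by
        have h2 := hIpos (φ u) (abs_lt.1 (by rw [hub]; exact hbpi))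
        have h3 := h2.trans_le (hRφ u)
        exact pos_of_mul_pos_right h3 hNpos.le
      refine hSt.push (Ωn := 0) hbpi (by rw [hub]; exact hbα) hub.le hκ (by simp) le_rfl hRpos.le ?_
      have : 0 < (Real.pi - b) ^ p := Real.rpow_pos_of_pos (by linarith) _
      positivity) t ⟨ht, le_rfl⟩
  have h2 := hC3 (φ 0) (abs_le.1 hφ0.le) (φ t) h1
  rw [div_le_iff₀ hNpos]
  linarith [hRφ t]

/-! ### Almost every solution reaches the level `a` -/

/-- The strict coupling condition leaves room for a level `a < I*`, as close to `I*` as needed,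
with a trapping radius `β` adapted to it. -/
lemma exists_level {N : ℕ} (hN : 1 ≤ N) {I S : ℝ → ℝ} {α₀ p q c₁ c₂ c₃ κ Istar Ωn : ℝ}
    (hSt : StructC I S α₀ p q c₁ c₂ c₃) (hIstar : 0 < Istar)
    (hκ : max (2 * (2 * c₂) ^ (p/q) / (c₁ * c₃) * Ωn / Istar ^ (1 + p/q))
        (2 / (c₁ * c₃ * (Real.pi - α₀) ^ p) * Ωn / Istar) < κ) :
    ∃ a β : ℝ, 0 < a ∧ a < Istar ∧ Istar < a * (N + 1) / N ∧ β < Real.pi ∧ α₀ ≤ β ∧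
      Real.pi - (a / (2 * c₂)) ^ (1 / q) ≤ β ∧
      Ωn < κ * (c₃ * a / 2) * (c₁ * (Real.pi - β) ^ p) := by
  have hNpos : (0 : ℝ) < N := by exact_mod_cast hN
  obtain ⟨hα, hp, hq, hc1, hc2, hc3, -, -, -, -⟩ := hSt
  have hc3' := hc3.1
  have hπα : 0 < Real.pi - α₀ := sub_pos.2 hα.2
  have hpow : 0 < (Real.pi - α₀) ^ p := Real.rpow_pos_of_pos hπα _
  obtain ⟨hκ1, hκ2⟩ := max_lt_iff.1 hκ
  let b : ℝ → ℝ := fun a => max α₀ (Real.pi - (a / (2 * c₂)) ^ (1 / q))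
  let F : ℝ → ℝ := fun a => κ * (c₃ * a / 2) * (c₁ * (Real.pi - b a) ^ p)
  have hq' : 0 < 1 / q := by positivity
  have hbcont : Continuous b :=
    continuous_const.max (continuous_const.sub
      ((continuous_id.div_const _).rpow_const fun _ => Or.inr hq'.le))
  have hFcont : Continuous F := by
    refine (continuous_const.mul ((continuous_const.mul continuous_id).div_const _)).mul
      (continuous_const.mul ((continuous_const.sub hbcont).rpow_const fun _ => Or.inr ?_))
    linarith
  have hF : Ωn < F Istar := by
    simp only [F, b]
    rcases max_choice α₀ (Real.pi - (Istar / (2 * c₂)) ^ (1 / q)) with h | h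
    -- radius `α₀`: this is the second part of the coupling condition
    · rw [h]
      rw [div_mul_eq_mul_div, div_div, div_lt_iff₀ (by positivity)] at hκ2
      linarith
    -- radius fixed by (C2): this is the first part, since `(π - β) ^ p = (I* / (2 c₂)) ^ (p / q)`
    · have h1 : (Real.pi - (Real.pi - (Istar / (2 * c₂)) ^ (1 / q))) ^ p =
          Istar ^ (p / q) / (2 * c₂) ^ (p / q) := by
        rw [sub_sub_cancel, ← Real.rpow_mul (by positivity), ← Real.div_rpow (by positivity)
          (by positivity)]
        congr 1
        ring
      rw [h, h1]
      have h2 : 0 < (2 * c₂) ^ (p / q) := by positivity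
      have h3 : 0 < Istar ^ (p / q) := by positivity
      rw [Real.rpow_add hIstar, Real.rpow_one, div_mul_eq_mul_div, div_div,
        div_lt_iff₀ (by positivity)] at hκ1
      have h4 : κ * (c₃ * Istar / 2) * (c₁ * (Istar ^ (p / q) / (2 * c₂) ^ (p / q))) =
          κ * (c₁ * c₃ * (Istar * Istar ^ (p / q))) / (2 * (2 * c₂) ^ (p / q)) := by
        field_simp
      rw [h4, lt_div_iff₀ (by positivity)]
      linarith
  have hG : Istar < Istar * (N + 1) / N := by
    rw [lt_div_iff₀ hNpos]; linarith
  have hGcont : Continuous fun a : ℝ => a * (N + 1) / N := by fun_prop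
  have hev : ∀ᶠ a in nhdsWithin Istar (Set.Iio Istar),
      0 < a ∧ a < Istar ∧ Istar < a * (N + 1) / N ∧ Ωn < F a := by
    have e1 := (lt_mem_nhds hIstar).filter_mono (nhdsWithin_le_nhds (s := Set.Iio Istar))
    have e2 := (hGcont.continuousAt.eventually (lt_mem_nhds hG)).filter_mono
      (nhdsWithin_le_nhds (s := Set.Iio Istar))
    have e3 := (hFcont.continuousAt.eventually (lt_mem_nhds hF)).filter_mono
      (nhdsWithin_le_nhds (s := Set.Iio Istar))
    filter_upwards [e1, e2, e3, self_mem_nhdsWithin] with a h1 h2 h3 h4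
    exact ⟨h1, h4, h2, h3⟩
  obtain ⟨a, ha0, haI, haN, haF⟩ := hev.exists
  refine ⟨a, b a, ha0, haI, haN, max_lt hα.2 ?_, le_max_left _ _, le_max_right _ _, haF⟩
  have : 0 < (a / (2 * c₂)) ^ (1 / q) := by positivity
  linarith

/-- Deterministic part: a solution whose influence reaches the level `a` satisfies both claims. -/
lemma conclusion_of_reach {N : ℕ} (hN : 1 ≤ N) {ω : Fin N → ℝ} {κ : ℝ} {I S : ℝ → ℝ}
    {α₀ p q c₁ c₂ c₃ : ℝ} (hSt : StructC I S α₀ p q c₁ c₂ c₃) (hκ : 0 < κ)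
    (hI0 : ∀ x, 0 ≤ I x) {Im : ℝ} (hIm : ∀ x, I x ≤ Im) (hIc : Continuous I)
    (hIper : Function.Periodic I (2 * Real.pi)) (hSper : Function.Periodic S (2 * Real.pi))
    {Ωn : ℝ} (hω : ∀ i, |ω i| ≤ Ωn) {a β Istar : ℝ} (ha : 0 < a)
    (haI : Istar < a * (N + 1) / N)
    (hβ : β < Real.pi) (hβα : α₀ ≤ β) (hβa : Real.pi - (a / (2 * c₂)) ^ (1 / q) ≤ β)
    (hΩ : Ωn < κ * (c₃ * a / 2) * (c₁ * (Real.pi - β) ^ p))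
    {θ0 : Fin N → ℝ} {θ : Fin N → ℝ → ℝ} (hθ : IsGenWinfreeSol N ω κ I S θ0 θ)
    {t0 : ℝ} (ht0 : 0 ≤ t0) (hR0 : a ≤ avgInfl N I θ t0) :
    (c₃ * Istar / 2 < Filter.liminf (fun t => avgInfl N I θ t) atTop) ∧
      (∀ i, Filter.IsBoundedUnder (· ≤ ·) atTop (θ i) ∧
        Filter.IsBoundedUnder (· ≥ ·) atTop (θ i) ∧
        Filter.limsup (θ i) atTop - Filter.liminf (θ i) atTop < 2 * Real.pi) := by
  have hNpos : (0 : ℝ) < N := by exact_mod_cast hN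
  have hc3 : 0 < c₃ := hSt.2.2.2.2.2.1.1
  have hα : 0 < α₀ := hSt.1.1
  have hlow := influence_persists hN hSt hκ hI0 hIc hIper hSper hω ha hβ hβα hβa hΩ hθ ht0 hR0
  have hgap : c₃ * a / 2 ≤ c₃ * a * (N + 1) / (2 * N) := by
    have := mul_pos hc3 ha
    rw [div_le_div_iff₀ two_pos (by positivity)]
    nlinarith
  refine ⟨?_, fun i => ?_⟩
  · have hup : IsBoundedUnder (· ≤ ·) atTop fun t => avgInfl N I θ t :=
      ⟨Im, by
        simp only [eventually_map]
        exact Eventually.of_forall fun t => infl_le hN I Im hIm (fun j => θ j t)⟩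
    refine lt_of_lt_of_le ?_ (le_liminf_of_le hup.isCoboundedUnder_ge
      ((eventually_ge_atTop t0).mono hlow))
    have h1 : c₃ * a * (N + 1) / (2 * N) = c₃ * (a * (N + 1) / N) / 2 := by
      field_simp
    rw [h1]
    gcongr
  · refine osc_of_barrier (θ i) (fun t => ω i + κ * avgInfl N I θ t * S (θ i t)) t0 β
      (hα.trans_le hβα) hβ (fun t ht => hθ.deriv_eq hN i t (ht0.trans ht)) fun t ht k hk => ?_
    have h1 : S (θ i t - k * (2 * Real.pi)) = S (θ i t) := hSper.sub_int_mul_eq k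
    have h2 := hSt.push (w := ω i) (R := avgInfl N I θ t) hβ (by rw [hk]; exact hβα) hk.le hκ
      (hω i) (hgap.trans (hlow t ht)) (by positivity) hΩ
    rwa [h1] at h2

/-- The initial data for which the influence never exceeds a level `a < I*` are negligible. -/
lemma WData.ae_reach {N : ℕ} {ω : Fin N → ℝ} {κ : ℝ} {I S : ℝ → ℝ}
    {Ωn Im Sm KI KS Istar c₄ : ℝ} (W : WData N ω κ I S Ωn Im Sm KI KS Istar c₄)
    {α₀ p q c₁ c₂ c₃ : ℝ} (hSt : StructC I S α₀ p q c₁ c₂ c₃)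
    (hIper : Function.Periodic I (2 * Real.pi)) (hSper : Function.Periodic S (2 * Real.pi))
    (hIpos : ∀ x ∈ Set.Ioo (-Real.pi) Real.pi, 0 < I x) {a : ℝ} (ha : a < Istar) :
    ∀ᵐ θ0 : Fin N → ℝ ∂volume, ∀ θ : Fin N → ℝ → ℝ, IsGenWinfreeSol N ω κ I S θ0 θ →
      ∃ t0, 0 ≤ t0 ∧ a ≤ avgInfl N I θ t0 := by
  have hball : ∀ x : Fin N → ℝ, ∃ L : ℕ, x ∈ Metric.closedBall (0 : Fin N → ℝ) L := fun x => by
    obtain ⟨L, hL⟩ := exists_nat_ge ‖x‖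
    exact ⟨L, by simpa using hL⟩
  -- Exhaust the space by balls, and in the frequency-free case the positive numbers by `1/(m+1)`.
  by_cases hω : ∃ i, ω i ≠ 0
  · obtain ⟨i, hi⟩ := hω
    obtain ⟨P, Ib, Pm, hIb, hP, hPm⟩ := exists_primitive I hIper W.hIdiff.continuous hIpos
    have h1 : ∀ᵐ θ0 : Fin N → ℝ ∂volume, ∀ L : ℕ, θ0 ∉ {θ0 : Fin N → ℝ |
        θ0 ∈ Metric.closedBall 0 (L : ℝ) ∧ ∃ θ, IsGenWinfreeSol N ω κ I S θ0 θ ∧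
          ∀ t, 0 ≤ t → avgInfl N I θ t ≤ a} :=
      ae_all_iff.2 fun L => measure_eq_zero_iff_ae_notMem.1
        (W.null_of_freq_ne a L ha L.cast_nonneg i hi P Ib Pm hIb hP hPm)
    filter_upwards [h1] with θ0 h θ hθ
    by_contra! hlt
    obtain ⟨L, hL⟩ := hball θ0
    exact h L ⟨hL, θ, hθ, fun t ht => (hlt t ht).le⟩
  · push Not at hω
    have h1 : ∀ᵐ θ0 : Fin N → ℝ ∂volume, ∀ L m : ℕ, θ0 ∉ {θ0 : Fin N → ℝ |
        θ0 ∈ Metric.closedBall 0 (L : ℝ) ∧ ∃ θ, IsGenWinfreeSol N ω κ I S θ0 θ ∧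
          ∀ t, 0 ≤ t → 1 / ((m : ℝ) + 1) ≤ avgInfl N I θ t ∧ avgInfl N I θ t ≤ a} :=
      ae_all_iff.2 fun L => ae_all_iff.2 fun m => measure_eq_zero_iff_ae_notMem.1
        (W.null_of_lower a _ L ha (by positivity) L.cast_nonneg)
    let i : Fin N := ⟨0, W.hN⟩
    have h2 : ∀ᵐ θ0 : Fin N → ℝ ∂volume, ∀ k : ℤ, θ0 i ≠ Real.pi + k * (2 * Real.pi) :=
      ae_all_iff.2 fun k => Measure.ae_eval_ne (μ := fun _ : Fin N => volume) i _
    filter_upwards [h1, h2] with θ0 h hne θ hθ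
    by_contra! hlt
    obtain ⟨L, hL⟩ := hball θ0
    obtain ⟨δ, hδ, hlow⟩ :=
      lower_of_freq_zero W.hN hSt W.hκ W.hI0 hIpos hIper hSper i (hω i) hθ hne
    obtain ⟨m, hm⟩ := exists_nat_one_div_lt hδ
    exact h L m ⟨hL, θ, hθ, fun t ht => ⟨hm.le.trans (hlow t ht), (hlt t ht).le⟩⟩

theorem stmt12 (N : ℕ) (hN : 1 ≤ N) (ω : Fin N → ℝ) (κ : ℝ) (I S : ℝ → ℝ)
    (α₀ p q c₁ c₂ c₃ : ℝ)
    (hGood : GoodIS I S) (hStruct : StructC I S α₀ p q c₁ c₂ c₃)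
    (hIdiff : Differentiable ℝ I) (hSdiff : Differentiable ℝ S)
    (Istar c₄ : ℝ) (hIstar : 0 < Istar) (hc₄ : 0 < c₄)
    (hC4 : ∀ x : ℝ, c₄ * (Istar - I x) ≤ deriv S x)
    (hC5 : ∀ x : ℝ, 0 ≤ deriv I x * S x)
    (hC6 : ∀ x ∈ Set.Ioo (-Real.pi) Real.pi, 0 < I x)
    (Ωn : ℝ) (hΩn : IsGreatest (Set.range fun i => |ω i|) Ωn)
    (hκ : max (2 * (2 * c₂) ^ (p/q) / (c₁ * c₃) * Ωn / Istar ^ (1 + p/q))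
        (2 / (c₁ * c₃ * (Real.pi - α₀) ^ p) * Ωn / Istar) < κ) :
    ∀ᵐ θ0 : Fin N → ℝ ∂volume,
      ∀ θ : Fin N → ℝ → ℝ, IsGenWinfreeSol N ω κ I S θ0 θ →
        -- (a)
        (c₃ * Istar / 2 < Filter.liminf (fun t => avgInfl N I θ t) atTop) ∧
        -- (b)
        (∀ i, Filter.IsBoundedUnder (· ≤ ·) atTop (θ i) ∧
          Filter.IsBoundedUnder (· ≥ ·) atTop (θ i) ∧
          Filter.limsup (θ i) atTop - Filter.liminf (θ i) atTop < 2 * Real.pi) := by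
  obtain ⟨hIper, hSper, ⟨KI, hKI⟩, ⟨KS, hKS⟩⟩ := hGood
  have hpi := Real.pi_pos
  obtain ⟨Im, hIm⟩ :=
    (hIper.isBounded_of_continuous (by positivity) hIdiff.continuous).exists_norm_le
  obtain ⟨Sm, hSm⟩ :=
    (hSper.isBounded_of_continuous (by positivity) hSdiff.continuous).exists_norm_le
  have hIm' : ∀ x, I x ≤ Im := fun x => (le_abs_self _).trans (hIm _ ⟨x, rfl⟩)
  have hI0 : ∀ x, 0 ≤ I x := fun x => by
    obtain ⟨k, hk⟩ := exists_shift x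
    have h1 : I (x - k * (2 * Real.pi)) = I x := hIper.sub_int_mul_eq k
    rw [← h1]
    exact (hStruct.2.2.2.2.2.2.2.2.1 _ (abs_le.1 hk)).1
  have hω : ∀ i, |ω i| ≤ Ωn := fun i => hΩn.2 ⟨i, rfl⟩
  have hΩ0 : 0 ≤ Ωn := (abs_nonneg _).trans (hω ⟨0, hN⟩)
  have hκ0 : 0 < κ := by
    refine lt_of_le_of_lt ?_ ((le_max_right _ _).trans_lt hκ)
    have h1 := hStruct.2.2.2.1
    have h2 := hStruct.2.2.2.2.2.1.1
    have h3 : 0 < Real.pi - α₀ := sub_pos.2 hStruct.1.2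
    positivity
  have W : WData N ω κ I S Ωn Im Sm KI KS Istar c₄ :=
    { hN := hN, hκ := hκ0, hω := hω, hI0 := hI0, hIm := hIm'
      hSm := fun x => hSm _ ⟨x, rfl⟩
      hKI := KI.coe_nonneg, hKS := KS.coe_nonneg
      hI := fun x y => hKI.dist_le_mul x y
      hS := fun x y => hKS.dist_le_mul x y
      hIdiff := hIdiff, hSdiff := hSdiff, hIstar := hIstar, hc₄ := hc₄
      hC4 := hC4, hC5 := hC5 }
  obtain ⟨a, β, ha, haI, haN, hβ, hβα, hβa, hΩ⟩ := exists_level hN hStruct hIstar hκ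
  filter_upwards [W.ae_reach hStruct hIper hSper hC6 haI] with θ0 h θ hθ
  obtain ⟨t0, ht0, hR⟩ := h θ hθ
  exact conclusion_of_reach hN hStruct hκ0 hI0 hIm' hIdiff.continuous hIper hSper hω ha haN
    hβ hβα hβa hΩ hθ ht0 hR
end

section
/- For every λ ∈ ℝ, (1/(2π)) ∫_{−π}^{π} exp(λ cos θ) dθ ≤ exp(λ²/4). Equivalently, if X is uniformly distributed on [−π,π], then cos X (which has mean zero) is (1/2)-subgaussian. -/
/-!
The left-hand side is the modified Bessel function `I₀(λ)`. Integrating the exponential series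
term by term reduces the claim to the moments of `cos` over a full period: Wallis' recursion
(`integral_cos_pow`) makes the odd moments vanish and gives
`∫ cos ^ (2k) = 2π (2k)! / (4 ^ k (k!)²)`. Hence `I₀(λ) = ∑ (λ² / 4) ^ k / (k!)²`, which is
dominated termwise by `∑ (λ² / 4) ^ k / k! = exp (λ² / 4)`.
-/

open MeasureTheory

open scoped Nat

lemma integral_cos_pow_add_two (n : ℕ) :
    ∫ x in (-Real.pi)..Real.pi, Real.cos x ^ (n + 2) =
      (n + 1) / (n + 2) * ∫ x in (-Real.pi)..Real.pi, Real.cos x ^ n := by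
  rw [integral_cos_pow]
  simp

lemma integral_cos_pow_odd_period (k : ℕ) :
    ∫ x in (-Real.pi)..Real.pi, Real.cos x ^ (2 * k + 1) = 0 := by
  induction k with
  | zero => simp
  | succ k ih =>
    rw [show 2 * (k + 1) + 1 = (2 * k + 1) + 2 by ring, integral_cos_pow_add_two, ih, mul_zero]

lemma integral_cos_pow_even_period (k : ℕ) :
    ∫ x in (-Real.pi)..Real.pi, Real.cos x ^ (2 * k) =
      2 * Real.pi * ((2 * k)! / (4 ^ k * (k ! : ℝ) ^ 2)) := by
  induction k with
  | zero => simp; ring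
  | succ k ih =>
    rw [show 2 * (k + 1) = 2 * k + 2 by ring, integral_cos_pow_add_two, ih,
      Nat.factorial_succ (2 * k + 1), Nat.factorial_succ (2 * k), Nat.factorial_succ k]
    push_cast
    field_simp
    ring

lemma hasSum_integral_exp_mul_cos (lam : ℝ) :
    HasSum (fun n : ℕ => lam ^ n / n ! * ∫ x in (-Real.pi)..Real.pi, Real.cos x ^ n)
      (∫ x in (-Real.pi)..Real.pi, Real.exp (lam * Real.cos x)) := by
  simp_rw [← intervalIntegral.integral_const_mul]
  refine intervalIntegral.hasSum_integral_of_dominated_convergence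
    (fun n _ => |lam| ^ n / n !) (fun n => ?_) (fun n => ?_) ?_ ?_ ?_
  · exact Continuous.aestronglyMeasurable (by fun_prop)
  · refine Filter.Eventually.of_forall fun x _ => ?_
    rw [norm_mul, norm_div, norm_pow, norm_pow, Real.norm_natCast]
    exact mul_le_of_le_one_right (by positivity)
      (pow_le_one₀ (norm_nonneg _) (Real.abs_cos_le_one x))
  · exact Filter.Eventually.of_forall fun x _ => Real.summable_pow_div_factorial _
  · exact intervalIntegrable_const
  · refine Filter.Eventually.of_forall fun x _ => ?_
    have h := NormedSpace.expSeries_div_hasSum_exp (lam * Real.cos x)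
    rw [← Real.exp_eq_exp_ℝ] at h
    refine h.congr_fun fun n => ?_
    rw [mul_pow]
    ring

theorem stmt14 (lam : ℝ) :
    (1 / (2 * Real.pi)) *
        ∫ x in Set.Icc (-Real.pi) Real.pi, Real.exp (lam * Real.cos x) ≤
      Real.exp (lam ^ 2 / 4) := by
  have hpi := Real.pi_pos
  rw [integral_Icc_eq_integral_Ioc, ← intervalIntegral.integral_of_le (by linarith)]
  have h := (hasSum_integral_exp_mul_cos lam).mul_left (1 / (2 * Real.pi))
  have hinj : Function.Injective (fun k : ℕ => 2 * k) := fun a b hab => by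
    simpa using hab
  rw [← hinj.hasSum_iff] at h
  · have hexp := NormedSpace.expSeries_div_hasSum_exp (lam ^ 2 / 4)
    rw [← Real.exp_eq_exp_ℝ] at hexp
    refine hasSum_le (fun k => ?_) h hexp
    have hfact : (1 : ℝ) ≤ k ! := by exact_mod_cast Nat.factorial_pos k
    calc _ = (lam ^ 2 / 4) ^ k / (k ! : ℝ) / (k ! : ℝ) := by
          simp only [Function.comp_apply]
          rw [integral_cos_pow_even_period, pow_mul, div_pow]
          field_simp
      _ ≤ (lam ^ 2 / 4) ^ k / (k ! : ℝ) := div_le_self (by positivity) hfact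
  · intro n hn
    obtain ⟨k, rfl | rfl⟩ := n.even_or_odd'
    · exact absurd ⟨k, rfl⟩ hn
    · rw [integral_cos_pow_odd_period, mul_zero, mul_zero]
end

section
/- For every λ > 0, (1/(2π)) ∫_{−π}^{π} exp(λ cos θ) dθ ≤ (1/2)·√(π/(2λ))·e^λ. -/
open MeasureTheory

/-! On `[-π, π]` the cosine lies below the parabola `1 - 2 x² / π²`
(`Real.cos_le_one_sub_mul_cos_sq`), so the integrand is at most `e^λ · exp (-(2λ/π²) x²)`.
Enlarging the domain to the whole line only increases the integral of this bound, and the Gaussian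
integral `√(π / (2λ/π²)) = π √(π / (2λ))` gives exactly the claimed constant. -/

theorem stmt15 (lam : ℝ) (hlam : 0 < lam) :
    (1 / (2 * Real.pi)) *
        ∫ x in Set.Icc (-Real.pi) Real.pi, Real.exp (lam * Real.cos x) ≤
      1 / 2 * Real.sqrt (Real.pi / (2 * lam)) * Real.exp lam := by
  have hpi := Real.pi_pos
  set b : ℝ := 2 * lam / Real.pi ^ 2 with hb
  have hbpos : 0 < b := by positivity
  have hint : Integrable (fun x : ℝ => Real.exp lam * Real.exp (-b * x ^ 2)) :=
    (integrable_exp_neg_mul_sq hbpos).const_mul _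
  have hsqrt : Real.sqrt (Real.pi / b) = Real.pi * Real.sqrt (Real.pi / (2 * lam)) := by
    have h : Real.pi / b = Real.pi ^ 2 * (Real.pi / (2 * lam)) := by
      rw [hb]; field_simp
    rw [h, Real.sqrt_mul (by positivity), Real.sqrt_sq hpi.le]
  have key : ∫ x in Set.Icc (-Real.pi) Real.pi, Real.exp (lam * Real.cos x) ≤
      Real.exp lam * (Real.pi * Real.sqrt (Real.pi / (2 * lam))) := by
    calc ∫ x in Set.Icc (-Real.pi) Real.pi, Real.exp (lam * Real.cos x)
        ≤ ∫ x in Set.Icc (-Real.pi) Real.pi, Real.exp lam * Real.exp (-b * x ^ 2) := by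
          refine setIntegral_mono_on ?_ hint.integrableOn measurableSet_Icc ?_
          · exact Continuous.integrableOn_Icc (by fun_prop)
          · intro x hx
            rw [← Real.exp_add]
            refine Real.exp_le_exp.2 ?_
            have h := mul_le_mul_of_nonneg_left
              (Real.cos_le_one_sub_mul_cos_sq (abs_le.2 ⟨hx.1, hx.2⟩)) hlam.le
            refine h.trans (le_of_eq ?_)
            rw [hb]; ring
      _ ≤ ∫ x, Real.exp lam * Real.exp (-b * x ^ 2) :=
          setIntegral_le_integral hint (Filter.Eventually.of_forall fun x => by positivity)
      _ = _ := by rw [integral_const_mul, integral_gaussian, hsqrt]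
  calc _ ≤ (1 / (2 * Real.pi)) *
        (Real.exp lam * (Real.pi * Real.sqrt (Real.pi / (2 * lam)))) := by gcongr
    _ = _ := by field_simp
end

section
/- For every t ∈ (0,1), the m-measure of the set of points (θ_1^0,…,θ_N^0) ∈ [−π,π]^N with (1/N) ∑_{j=1}^N (1 + cos θ_j^0) ≤ t is at most min{ exp(−(1−t)²N), (√(πet)/2)^N }. -/
/-! This is Chernoff's method. For `s ≥ 0` the indicator of `∑ j, (1 + cos θ_j) ≤ N t` is at most
`∏ j, exp (s (t - (1 + cos θ_j)))`, so by independence of the coordinates the measure is at most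
`(e^{st} (2π)⁻¹ ∫ e^{-s(1 + cos x)} dx) ^ N` (`normBox_le_pow`). The two bounds come from two
estimates of this one-dimensional integral.

* Since `(2π)⁻¹ ∫ cos^{2k} = (2k)! / (4^k k!²)`, expanding the exponential gives
  `(2π)⁻¹ ∫ e^{s cos x} dx = ∑ (s²/4)^k / k!² ≤ e^{s²/4}` (`integral_exp_cos_le`). Taking
  `s = 2(1 - t)` gives `exp(-(1-t)²)` per coordinate.
* After the shift `x ↦ x + π`, the inequality `1 - cos x ≥ 2x²/π²` on `[-π, π]` compares the
  integral with a Gaussian one: `∫ e^{-s(1 + cos x)} dx ≤ √(π³ / (2s))`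
  (`integral_exp_one_add_cos_le`). Taking `s = 1/(2t)` gives `√(πet)/2` per coordinate.
-/

open MeasureTheory

/-- The normalized Lebesgue measure on the box `[-π, π]^N`. -/
noncomputable def normBox (N : ℕ) : Measure (Fin N → ℝ) :=
  (ENNReal.ofReal ((2 * Real.pi) ^ N))⁻¹ •
    (volume.restrict (Set.univ.pi fun _ : Fin N => Set.Icc (-Real.pi) Real.pi))

open Real

/-- Exponential Markov inequality on the box; the integral factors over the coordinates. -/
lemma normBox_le_pow (N : ℕ) (hN : 1 ≤ N) (t s : ℝ) (hs : 0 ≤ s) :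
    normBox N {θ0 : Fin N → ℝ | (N : ℝ)⁻¹ * ∑ j, (1 + Real.cos (θ0 j)) ≤ t} ≤
      ENNReal.ofReal (((2 * π)⁻¹ * ∫ x in (-π)..π, exp (s * (t - (1 + cos x)))) ^ N) := by
  have hpi := Real.pi_pos
  set g : ℝ → ℝ := fun x => exp (s * (t - (1 + cos x))) with hg
  have hgc : Continuous g := by fun_prop
  have hgint : Integrable g (volume.restrict (Set.Icc (-π) π)) :=
    (hgc.continuousOn.integrableOn_Icc)
  have hν : (volume : Measure (Fin N → ℝ)).restrict
      (Set.univ.pi fun _ : Fin N => Set.Icc (-π) π) =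
      Measure.pi (fun _ => (volume : Measure ℝ).restrict (Set.Icc (-π) π)) := by
    rw [volume_pi, Measure.restrict_pi_pi]
  set ν : Measure (Fin N → ℝ) :=
    Measure.pi (fun _ => (volume : Measure ℝ).restrict (Set.Icc (-π) π)) with hνdef
  have hsub : {θ0 : Fin N → ℝ | (N : ℝ)⁻¹ * ∑ j, (1 + Real.cos (θ0 j)) ≤ t} ⊆
      {θ | (1 : ENNReal) ≤ ENNReal.ofReal (∏ j, g (θ j))} := by
    intro θ hθ
    simp only [Set.mem_ofPred_eq] at hθ ⊢
    rw [ENNReal.one_le_ofReal, hg, ← Real.exp_sum, Real.one_le_exp_iff, ← Finset.mul_sum,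
      Finset.sum_sub_distrib]
    apply mul_nonneg hs
    have hN' : (0 : ℝ) < N := by exact_mod_cast hN
    rw [inv_mul_le_iff₀ hN'] at hθ
    simpa using hθ
  have hmain : ν {θ0 : Fin N → ℝ | (N : ℝ)⁻¹ * ∑ j, (1 + Real.cos (θ0 j)) ≤ t} ≤
      ENNReal.ofReal ((∫ x in (-π)..π, g x) ^ N) := by
    have hint : Integrable (fun θ : Fin N → ℝ => ∏ j, g (θ j)) ν :=
      Integrable.fintype_prod (f := fun _ => g) (fun _ => hgint)
    have hval : ∫ θ, ∏ j, g (θ j) ∂ν = (∫ x in (-π)..π, g x) ^ N := by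
      rw [hνdef, integral_fintype_prod_eq_pow, Fintype.card_fin, integral_Icc_eq_integral_Ioc,
        ← intervalIntegral.integral_of_le (by linarith)]
    rw [← hval, ofReal_integral_eq_lintegral_ofReal hint
      (Filter.Eventually.of_forall fun θ => Finset.prod_nonneg fun j _ => (exp_pos _).le)]
    refine (measure_mono hsub).trans ?_
    have hmeas : AEMeasurable (fun θ : Fin N → ℝ => ENNReal.ofReal (∏ j, g (θ j))) ν :=
      hint.aemeasurable.ennreal_ofReal
    simpa using mul_meas_ge_le_lintegral₀ (μ := ν)
      (f := fun θ => ENNReal.ofReal (∏ j, g (θ j))) hmeas 1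
  have hc : (0 : ℝ) < (2 * π) ^ N := by positivity
  rw [normBox, hν, Measure.smul_apply, smul_eq_mul, mul_pow (2 * π)⁻¹, inv_pow,
    ENNReal.ofReal_mul (by positivity), ENNReal.ofReal_inv_of_pos hc]
  gcongr

/-- The even Wallis integrals, bounded by dropping one of the two factors `k!` in
`(2π)⁻¹ ∫ cos^{2k} = (2k)! / (4^k k!²)`. -/
lemma integral_cos_pow_even_le (k : ℕ) :
    (∫ x in (-π)..π, cos x ^ (2 * k)) / (2 * k).factorial ≤
      2 * π * ((1 / 4) ^ k / k.factorial) := by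
  induction k with
  | zero => simp; linarith
  | succ k ih =>
    have h0 : 0 ≤ (∫ x in (-π)..π, cos x ^ (2 * k)) / (2 * k).factorial := by
      apply div_nonneg _ (by positivity)
      exact intervalIntegral.integral_nonneg (by linarith [pi_pos])
        fun x _ => (even_two_mul k).pow_nonneg _
    have e : (∫ x in (-π)..π, cos x ^ (2 * (k + 1))) / (2 * (k + 1)).factorial =
        ((∫ x in (-π)..π, cos x ^ (2 * k)) / (2 * k).factorial) / (4 * ((k : ℝ) + 1) ^ 2) := by
      rw [show 2 * (k + 1) = 2 * k + 2 by ring, integral_cos_pow, Nat.factorial_succ,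
        Nat.factorial_succ]
      push_cast
      simp only [sin_neg, sin_pi]
      field_simp
      ring
    rw [e]
    calc _ ≤ ((∫ x in (-π)..π, cos x ^ (2 * k)) / (2 * k).factorial) / (4 * ((k : ℝ) + 1)) := by
          gcongr
          nlinarith [(Nat.cast_nonneg k : (0 : ℝ) ≤ k)]
      _ ≤ (2 * π * ((1 / 4) ^ k / k.factorial)) / (4 * ((k : ℝ) + 1)) := by gcongr
      _ = _ := by
          rw [Nat.factorial_succ]
          push_cast
          field_simp
          ring

lemma integral_cos_pow_odd_eq_zero (k : ℕ) : ∫ x in (-π)..π, cos x ^ (2 * k + 1) = 0 := by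
  induction k with
  | zero => simp
  | succ k ih =>
    rw [show 2 * (k + 1) + 1 = 2 * k + 1 + 2 by ring, integral_cos_pow, ih]
    simp

/-- The bound `I₀(s) ≤ e^{s²/4}` for the modified Bessel function
`I₀(s) = (2π)⁻¹ ∫ e^{s cos x} dx`. -/
lemma integral_exp_cos_le (s : ℝ) :
    ∫ x in (-π)..π, exp (s * cos x) ≤ 2 * π * exp (s ^ 2 / 4) := by
  have hexp : ∀ y : ℝ, HasSum (fun n : ℕ => y ^ n / n.factorial) (exp y) := fun y => by
    rw [Real.exp_eq_exp_ℝ]; exact NormedSpace.expSeries_div_hasSum_exp y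
  have h1 : HasSum (fun n : ℕ => ∫ x in (-π)..π, (s * cos x) ^ n / n.factorial)
      (∫ x in (-π)..π, exp (s * cos x)) := by
    refine intervalIntegral.hasSum_integral_of_dominated_convergence
      (fun n _ => |s| ^ n / n.factorial) ?_ ?_ ?_ ?_ ?_
    · intro n
      exact (by fun_prop : Continuous fun x => (s * cos x) ^ n / n.factorial).aestronglyMeasurable
    · refine fun n => Filter.Eventually.of_forall fun x _ => ?_
      rw [norm_div, norm_pow, norm_mul, Real.norm_eq_abs, Real.norm_eq_abs, RCLike.norm_natCast]
      gcongr
      exact mul_le_of_le_one_right (abs_nonneg _) (abs_cos_le_one x)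
    · exact Filter.Eventually.of_forall fun x _ => (hexp |s|).summable
    · exact intervalIntegrable_const
    · exact Filter.Eventually.of_forall fun x _ => hexp _
  have hterm : ∀ n : ℕ, ∫ x in (-π)..π, (s * cos x) ^ n / n.factorial =
      s ^ n * ((∫ x in (-π)..π, cos x ^ n) / n.factorial) := fun n => by
    rw [intervalIntegral.integral_div]
    simp_rw [mul_pow]
    rw [intervalIntegral.integral_const_mul, mul_div_assoc]
  simp_rw [hterm] at h1
  -- The odd terms vanish, so the sum runs over even indices only.
  have h2 : HasSum (fun k : ℕ => s ^ (2 * k) *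
      ((∫ x in (-π)..π, cos x ^ (2 * k)) / (2 * k).factorial))
      (∫ x in (-π)..π, exp (s * cos x)) := by
    have hinj : Function.Injective (fun k : ℕ => 2 * k) := fun a b h => by
      simpa using h
    refine (hinj.hasSum_iff ?_).2 h1
    intro n hn
    rcases Nat.even_or_odd' n with ⟨k, rfl | rfl⟩
    · exact absurd ⟨k, rfl⟩ hn
    · rw [integral_cos_pow_odd_eq_zero]; simp
  refine hasSum_le (fun k => ?_) h2 ((hexp (s ^ 2 / 4)).mul_left (2 * π))
  calc _ ≤ s ^ (2 * k) * (2 * π * ((1 / 4) ^ k / k.factorial)) :=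
        mul_le_mul_of_nonneg_left (integral_cos_pow_even_le k) ((even_two_mul k).pow_nonneg _)
    _ = _ := by rw [pow_mul, div_eq_mul_one_div (s ^ 2) 4, mul_pow]; ring

lemma integral_exp_one_add_cos_le (s : ℝ) (hs : 0 < s) :
    ∫ x in (-π)..π, exp (-s * (1 + cos x)) ≤ √(π / (2 * s / π ^ 2)) := by
  have hpi := pi_pos
  have e : ∫ x in (-π)..π, exp (-s * (1 + cos x)) =
      ∫ x in (-π)..π, exp (-s * (1 - cos x)) := by
    have hper : Function.Periodic (fun x => exp (-s * (1 - cos x))) (2 * π) := fun x => by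
      simp
    have h1 := hper.intervalIntegral_add_eq 0 (-π)
    have h2 := intervalIntegral.integral_comp_add_right (a := -π) (b := π)
      (fun x => exp (-s * (1 - cos x))) π
    simp only [cos_add_pi, sub_neg_eq_add] at h2
    rw [h2, show -π + π = 0 by ring, show π + π = 0 + 2 * π by ring, h1]
    congr 1
    ring
  have hb : 0 < 2 * s / π ^ 2 := by positivity
  rw [e, ← integral_gaussian]
  calc _ ≤ ∫ x in (-π)..π, exp (-(2 * s / π ^ 2) * x ^ 2) := by
        refine intervalIntegral.integral_mono_on (by linarith)
          (Continuous.intervalIntegrable (by fun_prop) _ _)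
          (Continuous.intervalIntegrable (by fun_prop) _ _) fun x hx => ?_
        rw [exp_le_exp]
        have := mul_le_mul_of_nonneg_left (cos_le_one_sub_mul_cos_sq (abs_le.2 hx)) hs.le
        have e2 : 2 * s / π ^ 2 * x ^ 2 = s * (2 / π ^ 2 * x ^ 2) := by ring
        linarith
    _ ≤ _ := by
        rw [intervalIntegral.integral_of_le (by linarith)]
        exact setIntegral_le_integral (integrable_exp_neg_mul_sq hb)
          (Filter.Eventually.of_forall fun x => (exp_pos _).le)

theorem stmt16 (N : ℕ) (hN : 1 ≤ N) (t : ℝ) (ht : t ∈ Set.Ioo (0:ℝ) 1) :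
    normBox N {θ0 : Fin N → ℝ | (N : ℝ)⁻¹ * ∑ j, (1 + Real.cos (θ0 j)) ≤ t} ≤
      ENNReal.ofReal (min (Real.exp (-(1 - t)^2 * N))
        ((Real.sqrt (Real.pi * Real.exp 1 * t) / 2) ^ N)) := by
  obtain ⟨h0, h1⟩ := ht
  have hpi := pi_pos
  have hnn : ∀ s : ℝ, 0 ≤ (2 * π)⁻¹ * ∫ x in (-π)..π, exp (s * (t - (1 + cos x))) := fun s =>
    mul_nonneg (by positivity)
      (intervalIntegral.integral_nonneg (by linarith) fun x _ => (exp_pos _).le)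
  rw [ENNReal.ofReal_min]
  refine le_min ?_ ?_
  · refine (normBox_le_pow N hN t (2 * (1 - t)) (by linarith)).trans
      (ENNReal.ofReal_le_ofReal ?_)
    rw [mul_comm _ (N : ℝ), exp_nat_mul]
    refine pow_le_pow_left₀ (hnn _) ?_ N
    have e : ∀ x, exp (2 * (1 - t) * (t - (1 + cos x))) =
        exp (-2 * (1 - t) ^ 2) * exp (-(2 * (1 - t)) * cos x) := fun x => by
      rw [← exp_add]; ring_nf
    simp_rw [e]
    rw [intervalIntegral.integral_const_mul]
    calc _ ≤ (2 * π)⁻¹ * (exp (-2 * (1 - t) ^ 2) *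
          (2 * π * exp ((-(2 * (1 - t))) ^ 2 / 4))) := by
          gcongr
          exact integral_exp_cos_le _
      _ = exp (-2 * (1 - t) ^ 2) * exp ((-(2 * (1 - t))) ^ 2 / 4) := by field_simp
      _ = _ := by rw [← exp_add]; ring_nf
  · refine (normBox_le_pow N hN t (1 / (2 * t)) (by positivity)).trans
      (ENNReal.ofReal_le_ofReal ?_)
    refine pow_le_pow_left₀ (hnn _) ?_ N
    have e : ∀ x, exp (1 / (2 * t) * (t - (1 + cos x))) =
        exp (1 / 2) * exp (-(1 / (2 * t)) * (1 + cos x)) := fun x => by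
      rw [← exp_add]
      congr 1
      field_simp
      ring
    simp_rw [e]
    rw [intervalIntegral.integral_const_mul]
    calc _ ≤ (2 * π)⁻¹ * (exp (1 / 2) * √(π / (2 * (1 / (2 * t)) / π ^ 2))) := by
          gcongr
          exact integral_exp_one_add_cos_le _ (by positivity)
      _ = _ := by
          have e1 : π / (2 * (1 / (2 * t)) / π ^ 2) = π ^ 2 * (π * t) := by field_simp
          rw [e1, sqrt_mul (by positivity), sqrt_sq hpi.le, exp_half,
            show π * exp 1 * t = exp 1 * (π * t) by ring, sqrt_mul (exp_pos 1).le]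
          field_simp
end

section
/- Fix ρ ∈ (0,2]. For any N ≥ 1, κ ≠ 0, and frequencies ω_1,…,ω_N ∈ ℝ such that N ≥ 2/ρ and max_{1≤i≤N}|ω_i|/|κ| < ρ^{1.5}/16, there exists an equilibrium (θ_1^0,…,θ_N^0) of the prototypical Winfree model whose order parameter lies in [ρ/4, (3/2)ρ]. Moreover, (θ_1^0,…,θ_N^0) can be chosen so that there exists an integer m with 1 ≤ m ≤ N and ρ/4 < m/N ≤ ρ/2 such that 2|ω_i|/(3ρ|κ|) ≤ |θ_i^0| ≤ 2π|ω_i|/(ρ|κ|) for i = 1,…,m, and 2|ω_i|/(3ρ|κ|) ≤ |θ_i^0 − π| ≤ 2π|ω_i|/(ρ|κ|) for i = m+1,…,N. -/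
/-! With `x i = ω i / (κ R)`, taking `θ i = arcsin (x i)` for `i < m` and `θ i = π - arcsin (x i)`
for `i ≥ m` solves the equilibrium equations as soon as `R` is the order parameter of `θ`, so what
is needed is a fixed point of the map sending `R` to the order parameter of this configuration.
With `m = ⌊N ρ / 2⌋` and `R ∈ [ρ/4, 3ρ/2]`, the hypothesis on `ω` gives `x i ^ 2 ≤ ρ / 16`; hence
each index below `m` contributes between `1` and `2` to the order sum, and each other index between
`0` and `ρ / 16`. The map therefore sends `[ρ/4, 3ρ/2]` to itself, and the intermediate value
theorem provides the fixed point. The bounds on the phases are `|x| ≤ |arcsin x| ≤ π / 2 * |x|`. -/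

/-- `θ0` is an equilibrium of the prototypical Winfree model with frequencies `ω`
and coupling strength `κ`. -/
def IsWinfreeEquilibrium (N : ℕ) (ω : Fin N → ℝ) (κ : ℝ) (θ0 : Fin N → ℝ) : Prop :=
  ∀ i, ω i = κ / (N : ℝ) * (∑ j, (1 + Real.cos (θ0 j))) * Real.sin (θ0 i)

/-- The phase with sine `x` close to `0` (for indices below `m`) or close to `π` (otherwise). -/
noncomputable def winfreePhase (m : ℕ) (x : ℝ) (k : ℕ) : ℝ :=
  if k < m then Real.arcsin x else Real.pi - Real.arcsin x

lemma sin_winfreePhase (m k : ℕ) {x : ℝ} (hx : |x| ≤ 1) :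
    Real.sin (winfreePhase m x k) = x := by
  have h := abs_le.1 hx
  unfold winfreePhase
  split_ifs
  · exact Real.sin_arcsin h.1 h.2
  · rw [Real.sin_pi_sub, Real.sin_arcsin h.1 h.2]

lemma continuous_winfreePhase (m k : ℕ) : Continuous fun x => winfreePhase m x k := by
  unfold winfreePhase
  split_ifs
  · exact Real.continuous_arcsin
  · exact continuous_const.sub Real.continuous_arcsin

lemma one_sub_sq_le_cos_arcsin {x : ℝ} (hx : |x| ≤ 1) : 1 - x ^ 2 ≤ Real.cos (Real.arcsin x) := by
  rw [Real.cos_arcsin]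
  have : x ^ 2 ≤ 1 := (sq_le_one_iff_abs_le_one x).2 hx
  apply Real.le_sqrt_of_sq_le
  nlinarith [sq_nonneg x]

lemma one_add_cos_winfreePhase_bounds (m k : ℕ) {x c : ℝ} (hx : |x| ≤ 1) (hc : x ^ 2 ≤ c) :
    (if k < m then (1 : ℝ) else 0) ≤ 1 + Real.cos (winfreePhase m x k) ∧
      1 + Real.cos (winfreePhase m x k) ≤ 2 * (if k < m then (1 : ℝ) else 0) + c := by
  have h0 := Real.cos_arcsin_nonneg x
  have h1 := Real.cos_le_one (Real.arcsin x)
  have h2 := one_sub_sq_le_cos_arcsin hx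
  have h3 := sq_nonneg x
  unfold winfreePhase
  split_ifs
  · constructor <;> linarith
  · rw [Real.cos_pi_sub]
    constructor <;> linarith

lemma abs_arcsin_bounds {x : ℝ} (hx : |x| ≤ 1) :
    |x| ≤ |Real.arcsin x| ∧ |Real.arcsin x| ≤ Real.pi / 2 * |x| := by
  have h := abs_le.1 hx
  have hs := Real.sin_arcsin h.1 h.2
  constructor
  · have := Real.abs_sin_le_abs (x := Real.arcsin x)
    rwa [hs] at this
  · have := Real.mul_abs_le_abs_sin (x := Real.arcsin x)
      (abs_le.2 ⟨Real.neg_pi_div_two_le_arcsin x, Real.arcsin_le_pi_div_two x⟩)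
    rw [hs] at this
    have hpi := Real.pi_pos
    calc |Real.arcsin x| = Real.pi / 2 * (2 / Real.pi * |Real.arcsin x|) := by field_simp
      _ ≤ _ := by gcongr

theorem stmt18 (ρ : ℝ) (hρ0 : 0 < ρ) (hρ2 : ρ ≤ 2)
    (N : ℕ) (hN : 1 ≤ N) (κ : ℝ) (hκ : κ ≠ 0) (ω : Fin N → ℝ)
    (hNρ : 2 / ρ ≤ (N : ℝ))
    (hω : ∀ i, |ω i| / |κ| < ρ ^ (1.5 : ℝ) / 16) :
    ∃ θ0 : Fin N → ℝ, IsWinfreeEquilibrium N ω κ θ0 ∧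
      (N : ℝ)⁻¹ * ∑ j, (1 + Real.cos (θ0 j)) ∈ Set.Icc (ρ / 4) (3 / 2 * ρ) ∧
      ∃ m : ℕ, 1 ≤ m ∧ m ≤ N ∧ ρ / 4 < (m : ℝ) / N ∧ (m : ℝ) / N ≤ ρ / 2 ∧
        (∀ i : Fin N, (i : ℕ) < m →
          2 * |ω i| / (3 * ρ * |κ|) ≤ |θ0 i| ∧
          |θ0 i| ≤ 2 * Real.pi * |ω i| / (ρ * |κ|)) ∧
        (∀ i : Fin N, m ≤ (i : ℕ) →
          2 * |ω i| / (3 * ρ * |κ|) ≤ |θ0 i - Real.pi| ∧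
          |θ0 i - Real.pi| ≤ 2 * Real.pi * |ω i| / (ρ * |κ|)) := by
  have hN0 : (0 : ℝ) < N := by exact_mod_cast hN
  have hκ' : 0 < |κ| := abs_pos.2 hκ
  obtain ⟨m, hm⟩ : ∃ m : ℕ, m = ⌊(N : ℝ) * ρ / 2⌋₊ := ⟨_, rfl⟩
  have hNρ1 : 1 ≤ (N : ℝ) * ρ / 2 := by
    rw [div_le_iff₀ hρ0] at hNρ
    linarith
  have hm1 : 1 ≤ m := by
    rw [hm]
    exact Nat.le_floor (by simpa using hNρ1)
  have hmle : (m : ℝ) ≤ N * ρ / 2 := by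
    rw [hm]
    exact Nat.floor_le (by linarith)
  have hmlt : (N : ℝ) * ρ / 2 < m + 1 := by
    rw [hm]
    exact Nat.lt_floor_add_one _
  have hm1' : (1 : ℝ) ≤ m := by exact_mod_cast hm1
  have hmN : m ≤ N := by
    have : (m : ℝ) ≤ N := by nlinarith
    exact_mod_cast this
  have hml : ρ / 4 < (m : ℝ) / N := by
    rw [lt_div_iff₀ hN0]
    linarith
  have hmu : (m : ℝ) / N ≤ ρ / 2 := by
    rw [div_le_iff₀ hN0]
    linarith
  have hρpow : (ρ ^ (1.5 : ℝ)) ^ 2 = ρ ^ 3 := by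
    rw [← Real.rpow_natCast, ← Real.rpow_mul hρ0.le, ← Real.rpow_natCast]
    norm_num
  have hsq : ∀ R ∈ Set.Icc (ρ / 4) (3 / 2 * ρ), ∀ i, (ω i / (κ * R)) ^ 2 ≤ ρ / 16 := by
    intro R hR i
    have hR0 : 0 < R := by linarith [hR.1]
    have h1 : (|ω i| / |κ|) ^ 2 ≤ ρ ^ 3 / 256 := by
      calc (|ω i| / |κ|) ^ 2 ≤ (ρ ^ (1.5 : ℝ) / 16) ^ 2 :=
            pow_le_pow_left₀ (by positivity) (hω i).le 2
        _ = ρ ^ 3 / 256 := by rw [div_pow, hρpow]; norm_num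
    have h2 : (ω i / (κ * R)) ^ 2 = (|ω i| / |κ|) ^ 2 / R ^ 2 := by
      rw [← div_div, div_pow _ R, ← abs_div, sq_abs]
    rw [h2, div_le_iff₀ (by positivity)]
    have h3 : (ρ / 4) ^ 2 ≤ R ^ 2 := pow_le_pow_left₀ (by positivity) hR.1 2
    nlinarith
  have habs : ∀ R ∈ Set.Icc (ρ / 4) (3 / 2 * ρ), ∀ i, |ω i / (κ * R)| ≤ 1 := fun R hR i =>
    (sq_le_one_iff_abs_le_one _).1 (by linarith [hsq R hR i])
  have hcard : ∑ j : Fin N, (if (j : ℕ) < m then (1 : ℝ) else 0) = m := by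
    rw [Finset.sum_boole, Fin.card_filter_val_lt, min_eq_right hmN]
  obtain ⟨R, hR, hfix⟩ := exists_mem_Icc_isFixedPt_of_mapsTo
    (f := fun R : ℝ => (N : ℝ)⁻¹ * ∑ j : Fin N,
      (1 + Real.cos (winfreePhase m (ω j / (κ * R)) j)))
    (a := ρ / 4) (b := 3 / 2 * ρ)
    (by
      refine continuousOn_const.mul (continuousOn_finsetSum _ fun j _ => ?_)
      refine continuousOn_const.add (Real.continuous_cos.comp_continuousOn
        ((continuous_winfreePhase m j).comp_continuousOn ?_))
      refine continuousOn_const.div (continuousOn_const.mul continuousOn_id) fun R hR => ?_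
      have hR0 : 0 < R := by linarith [hR.1]
      exact mul_ne_zero hκ hR0.ne')
    (by linarith)
    (by
      intro R hR
      have hlow := Finset.sum_le_sum fun (j : Fin N) (_ : j ∈ Finset.univ) =>
        (one_add_cos_winfreePhase_bounds m j (habs R hR j) (hsq R hR j)).1
      have hup := Finset.sum_le_sum fun (j : Fin N) (_ : j ∈ Finset.univ) =>
        (one_add_cos_winfreePhase_bounds m j (habs R hR j) (hsq R hR j)).2
      rw [hcard] at hlow
      rw [Finset.sum_add_distrib (f := fun j : Fin N => 2 * (if (j : ℕ) < m then (1 : ℝ) else 0)),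
        ← Finset.mul_sum, hcard] at hup
      simp only [Finset.sum_const, Finset.card_univ, Fintype.card_fin, nsmul_eq_mul] at hup
      rw [lt_div_iff₀ hN0] at hml
      have hNρ0 : 0 < (N : ℝ) * ρ := by positivity
      constructor
      · rw [le_inv_mul_iff₀ hN0]
        linarith
      · rw [inv_mul_le_iff₀ hN0]
        linarith)
  change (N : ℝ)⁻¹ * ∑ j : Fin N, (1 + Real.cos (winfreePhase m (ω j / (κ * R)) j)) = R at hfix
  have hR0 : 0 < R := by linarith [hR.1]
  have hbound : ∀ i, 2 * |ω i| / (3 * ρ * |κ|) ≤ |Real.arcsin (ω i / (κ * R))| ∧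
      |Real.arcsin (ω i / (κ * R))| ≤ 2 * Real.pi * |ω i| / (ρ * |κ|) := by
    intro i
    obtain ⟨h1, h2⟩ := abs_arcsin_bounds (habs R hR i)
    have hx : |ω i / (κ * R)| = |ω i| / (|κ| * R) := by
      rw [abs_div, abs_mul, abs_of_pos hR0]
    have hpi := Real.pi_pos
    rw [hx] at h1 h2
    constructor
    · refine le_trans ?_ h1
      calc 2 * |ω i| / (3 * ρ * |κ|) = |ω i| / (|κ| * (3 / 2 * ρ)) := by field_simp
        _ ≤ _ := by gcongr; exact hR.2
    · refine h2.trans ?_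
      calc Real.pi / 2 * (|ω i| / (|κ| * R)) ≤ Real.pi / 2 * (|ω i| / (|κ| * (ρ / 4))) := by
            gcongr
            exact hR.1
        _ = _ := by field_simp; ring
  refine ⟨fun i => winfreePhase m (ω i / (κ * R)) i, fun i => ?_, ?_, m, hm1, hmN, hml, hmu,
    fun i hi => ?_, fun i hi => ?_⟩
  · beta_reduce
    rw [sin_winfreePhase m i (habs R hR i), div_eq_mul_inv κ, mul_assoc κ, hfix]
    field_simp
  · beta_reduce
    rw [hfix]
    exact hR
  · simpa only [winfreePhase, if_pos hi] using hbound i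
  · have : Real.pi - Real.arcsin (ω i / (κ * R)) - Real.pi = -Real.arcsin (ω i / (κ * R)) := by
      ring
    simpa only [winfreePhase, if_neg hi.not_gt, this, abs_neg] using hbound i
end

section
/- Fix N ≥ 1, ω_1,…,ω_N ∈ ℝ and κ ≠ 0. Then the set of equilibria of the prototypical Winfree model contained in [0, 2π)^N is finite and has at most 2^{N+1} elements; equivalently, there are at most 2^{N+1} equilibria that are distinct modulo componentwise translation by integer multiples of 2π. -/
/-! ### Products over all choices of signs -/

open Polynomial Filter Topology Asymptotics

/-- Substituting `t + s` into `Q`, where `s` is a square root of `a`, and separating even and odd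
powers of `s`. The polynomials `U`, `V` depend only on `a`, so they serve `s` and `-s` alike. -/
lemma exists_shift_decomposition {A : Type*} [CommRing A] (a : A) (Q : A[X]) :
    ∃ U V : A[X], ∀ (B : Type) [CommRing B] (φ : A →+* B) (s : B), s ^ 2 = φ a →
      ∀ t, Q.eval₂ φ (t + s) = U.eval₂ φ t + s * V.eval₂ φ t := by
  induction Q using Polynomial.induction_on' with
  | add p q hp hq =>
    obtain ⟨U, V, h⟩ := hp
    obtain ⟨U', V', h'⟩ := hq
    refine ⟨U + U', V + V', fun B _ φ s hs t => ?_⟩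
    simp only [eval₂_add, h B φ s hs, h' B φ s hs]
    ring
  | monomial n c =>
    induction n with
    | zero => exact ⟨C c, 0, fun B _ φ s hs t => by simp⟩
    | succ n ih =>
      obtain ⟨U, V, h⟩ := ih
      refine ⟨X * U + C a * V, U + X * V, fun B _ φ s hs t => ?_⟩
      have e := h B φ s hs t
      simp only [eval₂_monomial] at e
      simp only [eval₂_monomial, eval₂_add, eval₂_mul, eval₂_X, eval₂_C, pow_succ, ← mul_assoc,
        e, ← hs]
      ring

/-- The product of `t - (± s 0 ± ⋯ ± s (n - 1))` over all signs is a polynomial in `t` whose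
coefficients depend only on the squares `a i` of the `s i`. The ring homomorphism `φ` allows `a i` to
be polynomials while the square roots `s i` exist only after evaluation at a point. -/
lemma exists_sign_norm {A : Type*} [CommRing A] (n : ℕ) (a : Fin n → A) :
    ∃ Q : A[X], ∀ (B : Type) [CommRing B] (φ : A →+* B) (s : Fin n → B),
      (∀ i, s i ^ 2 = φ (a i)) →
      ∀ t, Q.eval₂ φ t = ∏ ε : Fin n → ℤˣ, (t - ∑ i, ((ε i : ℤ) : B) * s i) := by
  induction n with
  | zero => exact ⟨X, fun B _ φ s hs t => by simp⟩
  | succ n ih =>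
    obtain ⟨Q, hQ⟩ := ih (fun i => a i.succ)
    obtain ⟨U, V, h⟩ := exists_shift_decomposition (a 0) Q
    refine ⟨U ^ 2 - C (a 0) * V ^ 2, fun B _ φ s hs t => ?_⟩
    have h1 := h B φ (s 0) (hs 0) t
    have h2 := h B φ (- s 0) (by rw [neg_sq, hs 0]) t
    rw [hQ B φ (fun i => s i.succ) (fun i => hs i.succ)] at h1 h2
    rw [← (Fin.consEquiv (fun _ : Fin (n + 1) => ℤˣ)).prod_comp, Fintype.prod_prod_type,
      (by decide : (Finset.univ : Finset ℤˣ) = {1, -1}), Finset.prod_insert (by decide), Finset.prod_singleton]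
    simp only [Fin.consEquiv_apply, Fin.sum_univ_succ, Fin.cons_zero, Fin.cons_succ,
      ← sub_sub, eval₂_sub, eval₂_mul, eval₂_pow, eval₂_C, ← hs 0]
    simp only [Units.val_one, Units.val_neg, Int.cast_one, Int.cast_neg, one_mul, neg_mul,
      sub_neg_eq_add, ← sub_eq_add_neg] at h1 h2 ⊢
    -- the two values of the sign at `0` give `(U + s 0 * V) * (U - s 0 * V)`
    rw [h1, h2]
    ring

/-! ### Reading multiplicity and degree off growth rates -/

lemma le_rootMultiplicity_of_isBigO {P : ℝ[X]} (hP : P ≠ 0) {r : ℝ} {m : ℕ}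
    (h : (fun x => P.eval x) =O[𝓝[>] r] fun x => (x - r) ^ m) :
    m ≤ P.rootMultiplicity r := by
  obtain ⟨Q, hQ, hnd⟩ := P.exists_eq_pow_rootMultiplicity_mul_and_not_dvd hP r
  set k := P.rootMultiplicity r
  by_contra! hk
  apply hnd
  rw [dvd_iff_isRoot, IsRoot.def]
  obtain ⟨c, hc⟩ := h.bound
  have hO : (fun x => Q.eval x) =O[𝓝[>] r] fun x => (x - r) ^ (m - k) := by
    refine IsBigO.of_bound c ?_
    filter_upwards [hc, self_mem_nhdsWithin] with x hx hxr
    have hpos : 0 < (x - r) ^ k := pow_pos (sub_pos.2 hxr) k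
    rw [hQ, ← Nat.add_sub_of_le hk.le, pow_add] at hx
    simp only [eval_mul, eval_pow, eval_sub, eval_X, eval_C, norm_mul,
      Real.norm_of_nonneg hpos.le] at hx
    refine le_of_mul_le_mul_left ?_ hpos
    linarith
  have hz : Tendsto (fun x : ℝ => (x - r) ^ (m - k)) (𝓝[>] r) (𝓝 0) := by
    have : Tendsto (fun x : ℝ => (x - r) ^ (m - k)) (𝓝 r) (𝓝 ((r - r) ^ (m - k))) :=
      (by fun_prop : Continuous fun x : ℝ => (x - r) ^ (m - k)).tendsto r
    rw [sub_self, zero_pow (by omega)] at this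
    exact this.mono_left nhdsWithin_le_nhds
  exact tendsto_nhds_unique ((Q.continuous.tendsto r).mono_left nhdsWithin_le_nhds)
    (hO.trans_tendsto hz)

lemma natDegree_le_of_isBigO {P : ℝ[X]} (hP : P ≠ 0) {m : ℕ}
    (h : (fun x => P.eval x) =O[atTop] fun x : ℝ => x ^ m) : P.natDegree ≤ m := by
  by_contra! hm
  have h1 : (X ^ m : ℝ[X]).degree < P.degree := by
    rw [degree_X_pow, degree_eq_natDegree hP]
    exact_mod_cast hm
  have h2 := isLittleO_atTop_of_degree_lt _ _ h1
  have h3 : (fun x => P.eval x) =o[atTop] fun x => P.eval x :=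
    h.trans_isLittleO (by simpa using h2)
  have h4 := isLittleO_irrefl (l := (atTop : Filter ℝ)) (f'' := fun x => P.eval x)
    (eventually_atTop_not_isRoot P hP).frequently
  exact h4 h3

/-! ### The polynomial satisfied by the order parameter -/

/-- The function `x ^ 2 - N * x - ∑ i, ε i * √(x ^ 2 - w i ^ 2)` attached to a sign pattern `ε`.
It is meaningful for `x ≥ max |w i|`; elsewhere the convention `√y = 0` for `y < 0` intervenes.
Its zeros are the candidate values of `∑ j, (1 + cos θ j)` when `cos θ i` has the sign `ε i`. -/
noncomputable def winfreeFactor {N : ℕ} (w : Fin N → ℝ) (ε : Fin N → ℤˣ) (x : ℝ) : ℝ :=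
  x ^ 2 - N * x - ∑ i, ((ε i : ℤ) : ℝ) * √(x ^ 2 - w i ^ 2)

lemma exists_winfree_polynomial {N : ℕ} (w : Fin N → ℝ) :
    ∃ P : ℝ[X], ∀ x, (∀ i, |w i| ≤ x) →
      P.eval x = ∏ ε : Fin N → ℤˣ, winfreeFactor w ε x := by
  obtain ⟨Q, hQ⟩ := exists_sign_norm N (fun i => (X ^ 2 - C (w i ^ 2) : ℝ[X]))
  refine ⟨Q.eval (X ^ 2 - C (N : ℝ) * X), fun x hx => ?_⟩
  have h := hQ ℝ (evalRingHom x) (fun i => √(x ^ 2 - w i ^ 2)) (fun i => ?_) (x ^ 2 - N * x)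
  · have e : (evalRingHom x) (Q.eval (X ^ 2 - C (N : ℝ) * X)) =
        Q.eval₂ (evalRingHom x) (x ^ 2 - N * x) := by
      rw [← eval₂_at_apply]
      simp
    exact e.trans h
  · rw [Real.sq_sqrt (sub_nonneg.2 (sq_le_sq' (by linarith [neg_abs_le (w i), hx i])
      ((le_abs_self _).trans (hx i))))]
    simp

lemma abs_signed_sum_le {N : ℕ} (w : Fin N → ℝ) (ε : Fin N → ℤˣ) {x : ℝ} (hx : 0 ≤ x) :
    |∑ i, ((ε i : ℤ) : ℝ) * √(x ^ 2 - w i ^ 2)| ≤ N * x := by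
  refine (Finset.abs_sum_le_sum_abs _ _).trans ?_
  refine (Finset.sum_le_card_nsmul _ _ x fun i _ => ?_).trans (by simp)
  have : |((ε i : ℤ) : ℝ)| = 1 := by
    rcases Int.units_eq_one_or (ε i) with h | h <;> simp [h]
  rw [abs_mul, this, one_mul, abs_of_nonneg (Real.sqrt_nonneg _)]
  exact Real.sqrt_le_iff.2 ⟨hx, by nlinarith [sq_nonneg (w i)]⟩

lemma winfree_polynomial_ne_zero_natDegree {N : ℕ} (w : Fin N → ℝ) {P : ℝ[X]}
    (hP : ∀ x, (∀ i, |w i| ≤ x) → P.eval x = ∏ ε : Fin N → ℤˣ, winfreeFactor w ε x) :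
    P ≠ 0 ∧ P.natDegree ≤ 2 ^ (N + 1) := by
  have hev : ∀ᶠ x : ℝ in atTop, ∀ i, |w i| ≤ x :=
    eventually_all.2 fun i => eventually_ge_atTop _
  have hP0 : P ≠ 0 := by
    rintro rfl
    obtain ⟨x, hx, hxN⟩ := (hev.and (eventually_gt_atTop (2 * N : ℝ))).exists
    have hx0 : 0 < x := lt_of_le_of_lt (by positivity) hxN
    have h := hP x hx
    rw [eval_zero, eq_comm, Finset.prod_eq_zero_iff] at h
    obtain ⟨ε, -, hε⟩ := h
    have := (abs_le.1 (abs_signed_sum_le w ε hx0.le)).2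
    unfold winfreeFactor at hε
    nlinarith
  refine ⟨hP0, natDegree_le_of_isBigO hP0 ?_⟩
  have hF : ∀ ε : Fin N → ℤˣ, winfreeFactor w ε =O[atTop] fun x : ℝ => x ^ 2 := by
    intro ε
    refine IsBigO.of_bound (1 + 2 * N) ?_
    filter_upwards [eventually_ge_atTop (1 : ℝ)] with x hx
    have h1 := abs_le.1 (abs_signed_sum_le w ε (zero_le_one.trans hx))
    have h2 : (N : ℝ) * x ≤ N * x ^ 2 := by gcongr; nlinarith
    have h3 : (0 : ℝ) ≤ N * x := by positivity
    rw [Real.norm_eq_abs, Real.norm_of_nonneg (sq_nonneg x), winfreeFactor, abs_le]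
    constructor <;> nlinarith
  have h := IsBigO.finsetProd (s := Finset.univ) fun ε _ => hF ε
  refine (h.congr' ?_ ?_)
  · filter_upwards [hev] with x hx using (hP x hx).symm
  · filter_upwards with x
    rw [Finset.prod_const, ← pow_mul, pow_succ 2 N, mul_comm]
    simp

/-! ### Decay of the factors and of the polynomial at a zero -/

lemma winfreeFactor_isBigO_sqrt {N : ℕ} (w : Fin N → ℝ) (ε : Fin N → ℤˣ) {r : ℝ} (hr : 0 < r)
    (hw : ∀ i, |w i| ≤ r) (h0 : winfreeFactor w ε r = 0) :
    winfreeFactor w ε =O[𝓝[>] r] fun x => √(x - r) := by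
  have hsmall : ∀ᶠ x in 𝓝[>] r, x < r + 1 :=
    nhdsWithin_le_nhds (Iio_mem_nhds (by linarith))
  have h1 : ∀ i, (fun x => ((ε i : ℤ) : ℝ) * (√(x ^ 2 - w i ^ 2) - √(r ^ 2 - w i ^ 2)))
      =O[𝓝[>] r] fun x => √(x - r) := by
    intro i
    refine IsBigO.const_mul_left (IsBigO.of_bound (√(2 * r + 1)) ?_) _
    filter_upwards [hsmall, self_mem_nhdsWithin] with x hx hxr
    have hxr : r < x := hxr
    have hB : 0 ≤ r ^ 2 - w i ^ 2 := sub_nonneg.2 (sq_le_sq.2 (by simpa [abs_of_pos hr] using hw i))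
    have hle : √(r ^ 2 - w i ^ 2) ≤ √(x ^ 2 - w i ^ 2) := Real.sqrt_le_sqrt (by nlinarith)
    rw [Real.norm_of_nonneg (sub_nonneg.2 hle), Real.norm_of_nonneg (Real.sqrt_nonneg _),
      ← Real.sqrt_mul (by linarith), sub_le_iff_le_add, Real.sqrt_le_iff]
    refine ⟨by positivity, ?_⟩
    -- the claim is `√A ≤ √(A - B) + √B` together with `x ^ 2 - r ^ 2 ≤ (2 * r + 1) * (x - r)`
    have e1 := Real.sq_sqrt (x := (2 * r + 1) * (x - r)) (mul_nonneg (by linarith) (by linarith))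
    have e2 := Real.sq_sqrt hB
    nlinarith [mul_nonneg (Real.sqrt_nonneg ((2 * r + 1) * (x - r)))
      (Real.sqrt_nonneg (r ^ 2 - w i ^ 2))]
  have h2 : (fun x : ℝ => (x ^ 2 - N * x) - (r ^ 2 - N * r)) =O[𝓝[>] r] fun x => √(x - r) := by
    refine IsBigO.of_bound (2 * r + 1 + N) ?_
    filter_upwards [hsmall, self_mem_nhdsWithin] with x hx hxr
    have hxr : r < x := hxr
    have hs1 : x - r ≤ √(x - r) := Real.le_sqrt_of_sq_le (by nlinarith)
    have hN : (0 : ℝ) ≤ N := N.cast_nonneg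
    have : (x ^ 2 - N * x) - (r ^ 2 - N * r) = (x + r - N) * (x - r) := by ring
    rw [this, norm_mul, Real.norm_eq_abs, Real.norm_of_nonneg (sub_nonneg.2 hxr.le),
      Real.norm_of_nonneg (Real.sqrt_nonneg _)]
    gcongr
    rw [abs_le]
    constructor <;> linarith
  have h3 := h2.sub (IsBigO.sum fun i (_ : i ∈ Finset.univ) => h1 i)
  refine h3.congr_left fun x => ?_
  rw [← sub_zero (winfreeFactor w ε x), ← h0]
  simp only [winfreeFactor, mul_sub, Finset.sum_sub_distrib, Finset.sum_apply]
  ring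

lemma winfreeFactor_isBigO_sub {N : ℕ} (w : Fin N → ℝ) (ε : Fin N → ℤˣ) {r : ℝ}
    (hw : ∀ i, r ^ 2 - w i ^ 2 ≠ 0) (h0 : winfreeFactor w ε r = 0) :
    winfreeFactor w ε =O[𝓝[>] r] fun x => √(x - r) ^ 2 := by
  have hd : DifferentiableAt ℝ (winfreeFactor w ε) r := by
    unfold winfreeFactor
    refine DifferentiableAt.sub (by fun_prop) (DifferentiableAt.fun_sum fun i _ => ?_)
    have h1 : DifferentiableAt ℝ (fun x : ℝ => x ^ 2 - w i ^ 2) r := by fun_prop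
    exact (h1.sqrt (hw i)).const_mul _
  refine (hd.isBigO_sub.mono nhdsWithin_le_nhds).congr' ?_ ?_
  · filter_upwards with x
    rw [h0, sub_zero]
  · filter_upwards [self_mem_nhdsWithin] with x hx
    rw [Real.sq_sqrt (sub_nonneg.2 (le_of_lt hx))]

/-- Each factor in `V` contributes `p / 2` to the order of vanishing of `P` at `r`. The order is
measured in powers of `√(x - r)` in order to stay within natural numbers. -/
lemma le_rootMultiplicity_of_vanishing_factors {N : ℕ} (w : Fin N → ℝ) {P : ℝ[X]} (hP0 : P ≠ 0)
    (hP : ∀ x, (∀ i, |w i| ≤ x) → P.eval x = ∏ ε : Fin N → ℤˣ, winfreeFactor w ε x)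
    {r : ℝ} (hw : ∀ i, |w i| ≤ r) {p m : ℕ} (V : Finset (Fin N → ℤˣ))
    (hV : ∀ ε ∈ V, winfreeFactor w ε =O[𝓝[>] r] fun x => √(x - r) ^ p)
    (hm : 2 * m ≤ p * V.card) : m ≤ P.rootMultiplicity r := by
  classical
  apply le_rootMultiplicity_of_isBigO hP0
  have hF : ∀ ε ∈ Finset.univ, winfreeFactor w ε =O[𝓝[>] r]
      fun x => if ε ∈ V then √(x - r) ^ p else 1 := by
    intro ε _
    by_cases hε : ε ∈ V
    · simpa [hε] using hV ε hε
    · have hc : Continuous (winfreeFactor w ε) := by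
        unfold winfreeFactor
        fun_prop
      simpa [hε] using ((hc.tendsto r).mono_left nhdsWithin_le_nhds).isBigO_one ℝ
  have h := IsBigO.finsetProd hF
  have h1 : (fun x => P.eval x) =O[𝓝[>] r] fun x => √(x - r) ^ (p * V.card) := by
    refine h.congr' ?_ ?_
    · filter_upwards [self_mem_nhdsWithin] with x hx
      exact (hP x fun i => (hw i).trans (le_of_lt hx)).symm
    · filter_upwards with x
      rw [Finset.prod_ite, Finset.prod_const_one, mul_one, Finset.prod_const, pow_mul]
      simp
  refine h1.trans (IsBigO.of_bound 1 ?_)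
  have hsmall : ∀ᶠ x in 𝓝[>] r, x < r + 1 :=
    nhdsWithin_le_nhds (Iio_mem_nhds (by linarith))
  filter_upwards [hsmall, self_mem_nhdsWithin] with x hx hxr
  have hxr : r < x := hxr
  have e : (x - r) ^ m = √(x - r) ^ (2 * m) := by
    rw [pow_mul, Real.sq_sqrt (sub_nonneg.2 hxr.le)]
  rw [e, one_mul, Real.norm_of_nonneg (by positivity), Real.norm_of_nonneg (by positivity)]
  exact pow_le_pow_of_le_one (Real.sqrt_nonneg _) (Real.sqrt_le_one.2 (by linarith)) hm

/-! ### Counting equilibria -/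

lemma eq_of_cos_eq_sin_eq_of_mem_Ico {a b : ℝ} (ha : a ∈ Set.Ico 0 (2 * Real.pi))
    (hb : b ∈ Set.Ico 0 (2 * Real.pi)) (hc : Real.cos a = Real.cos b)
    (hs : Real.sin a = Real.sin b) : a = b := by
  obtain ⟨k, hk⟩ := Real.Angle.angle_eq_iff_two_pi_dvd_sub.1 (Real.Angle.cos_sin_inj hc hs)
  have hpi := Real.pi_pos
  have h1 : (k : ℝ) < 1 := by
    by_contra! h
    nlinarith [ha.1, ha.2, hb.1, hb.2]
  have h2 : (-1 : ℝ) < k := by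
    by_contra! h
    nlinarith [ha.1, ha.2, hb.1, hb.2]
  have h3 : k = 0 := by
    have : k < 1 := by exact_mod_cast h1
    have : -1 < k := by exact_mod_cast h2
    omega
  rw [h3] at hk
  simp at hk
  linarith

/-- The equilibria whose cosine sum `∑ j, (1 + cos θ j)` equals `r` number at most the multiplicity
of `r` as a root of `P`. -/
lemma card_fiber_le_rootMultiplicity {N : ℕ} (w : Fin N → ℝ) {P : ℝ[X]} (hP0 : P ≠ 0)
    (hP : ∀ x, (∀ i, |w i| ≤ x) → P.eval x = ∏ ε : Fin N → ℤˣ, winfreeFactor w ε x)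
    {r : ℝ} (hr : 0 < r) (T : Finset (Fin N → ℝ))
    (hT : ∀ θ ∈ T, (∀ i, θ i ∈ Set.Ico 0 (2 * Real.pi)) ∧ (∀ i, w i = r * Real.sin (θ i)) ∧
      ∑ j, (1 + Real.cos (θ j)) = r) :
    T.card ≤ P.rootMultiplicity r := by
  classical
  rcases T.eq_empty_or_nonempty with rfl | ⟨θ₀, hθ₀⟩
  · simp
  have hw : ∀ i, |w i| ≤ r := fun i => by
    rw [(hT θ₀ hθ₀).2.1 i, abs_mul, abs_of_pos hr]
    exact mul_le_of_le_one_right hr.le (Real.abs_sin_le_one _)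
  -- `G θ ε`: the signs `ε` are compatible with the cosines of `θ` (not unique where a cosine is `0`)
  let G : (Fin N → ℝ) → (Fin N → ℤˣ) → Prop := fun θ ε =>
    ∀ i, r * Real.cos (θ i) = ((ε i : ℤ) : ℝ) * √(r ^ 2 - w i ^ 2)
  have hsq : ∀ θ ∈ T, ∀ i, √(r ^ 2 - w i ^ 2) = |r * Real.cos (θ i)| := fun θ hθ i => by
    rw [← Real.sqrt_sq_eq_abs, (hT θ hθ).2.1 i]
    congr 1
    linear_combination (-r ^ 2) * Real.sin_sq_add_cos_sq (θ i)
  have hGex : ∀ θ ∈ T, ∃ ε, G θ ε := fun θ hθ => by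
    refine ⟨fun i => if 0 ≤ Real.cos (θ i) then 1 else -1, fun i => ?_⟩
    rw [hsq θ hθ i]
    beta_reduce
    split_ifs with h
    · simp [abs_of_nonneg (mul_nonneg hr.le h)]
    · simp [abs_of_neg (mul_neg_of_pos_of_neg hr (not_le.1 h))]
  have hGzero : ∀ θ ∈ T, ∀ ε, G θ ε → winfreeFactor w ε r = 0 := fun θ hθ ε h => by
    have h1 := (hT θ hθ).2.2
    rw [Finset.sum_add_distrib] at h1
    simp only [Finset.sum_const, Finset.card_univ, Fintype.card_fin, nsmul_eq_mul, mul_one] at h1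
    rw [winfreeFactor, ← Finset.sum_congr rfl fun i _ => h i, ← Finset.mul_sum]
    linear_combination (-r) * h1
  have hGinj : ∀ θ ∈ T, ∀ θ' ∈ T, ∀ ε, G θ ε → G θ' ε → θ = θ' := fun θ hθ θ' hθ' ε h h' => by
    funext i
    refine eq_of_cos_eq_sin_eq_of_mem_Ico ((hT θ hθ).1 i) ((hT θ' hθ').1 i) ?_ ?_
    · exact mul_left_cancel₀ hr.ne' ((h i).trans (h' i).symm)
    · exact mul_left_cancel₀ hr.ne' (((hT θ hθ).2.1 i).symm.trans ((hT θ' hθ').2.1 i))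
  choose! σ hσ using hGex
  let V : Finset (Fin N → ℤˣ) := Finset.univ.filter fun ε => winfreeFactor w ε r = 0
  by_cases hD : ∀ i, r ^ 2 - w i ^ 2 ≠ 0
  · refine le_rootMultiplicity_of_vanishing_factors w hP0 hP hw (p := 2) V
      (fun ε hε => winfreeFactor_isBigO_sub w ε hD (Finset.mem_filter.1 hε).2) ?_
    refine Nat.mul_le_mul_left 2 (Finset.card_le_card_of_injOn σ ?_ ?_)
    · intro θ hθ
      simpa [V] using hGzero θ hθ _ (hσ θ hθ)
    · intro θ hθ θ' hθ' h
      exact hGinj θ hθ θ' hθ' _ (hσ θ hθ) (h ▸ hσ θ' hθ')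
  · push Not at hD
    obtain ⟨k, hk⟩ := hD
    -- since the square root at `k` vanishes, the sign there can be chosen freely
    have hup : ∀ θ ∈ T, ∀ δ, G θ (Function.update (σ θ) k δ) := fun θ hθ δ i => by
      have h := hσ θ hθ i
      rcases eq_or_ne i k with rfl | hi
      · rw [h, hk]
        simp
      · rw [Function.update_of_ne hi, h]
    refine le_rootMultiplicity_of_vanishing_factors w hP0 hP hw (p := 1) V
      (fun ε hε => by
        simpa using winfreeFactor_isBigO_sqrt w ε hr hw (Finset.mem_filter.1 hε).2) ?_
    -- hence `T × {1, -1}` embeds into the set of vanishing factors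
    have hcard : (T ×ˢ (Finset.univ : Finset ℤˣ)).card ≤ V.card := by
      refine Finset.card_le_card_of_injOn (fun q => Function.update (σ q.1) k q.2) ?_ ?_
      · rintro ⟨θ, δ⟩ hq
        have hθ : θ ∈ T := (Finset.mem_product.1 hq).1
        simpa [V] using hGzero θ hθ _ (hup θ hθ δ)
      · rintro ⟨θ, δ⟩ hq ⟨θ', δ'⟩ hq' h
        have hθ : θ ∈ T := (Finset.mem_product.1 hq).1
        have hθ' : θ' ∈ T := (Finset.mem_product.1 hq').1
        simp only at h
        have h1 : θ = θ' := hGinj θ hθ θ' hθ' _ (hup θ hθ δ) (h ▸ hup θ' hθ' δ')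
        have h2 := congrFun h k
        simp only [Function.update_self] at h2
        rw [h1, h2]
    rw [Finset.card_product, Finset.card_univ, Fintype.card_units_int] at hcard
    omega

/-- The bound for equilibria with nonzero order parameter: summing the multiplicities of the roots
of `P`. -/
lemma card_le_of_winfree {N : ℕ} (w : Fin N → ℝ) (T : Finset (Fin N → ℝ))
    (hT : ∀ θ ∈ T, (∀ i, θ i ∈ Set.Ico 0 (2 * Real.pi)) ∧
      (∀ i, w i = (∑ j, (1 + Real.cos (θ j))) * Real.sin (θ i)) ∧
      0 < ∑ j, (1 + Real.cos (θ j))) :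
    T.card ≤ 2 ^ (N + 1) := by
  classical
  obtain ⟨P, hP⟩ := exists_winfree_polynomial w
  obtain ⟨hP0, hdeg⟩ := winfree_polynomial_ne_zero_natDegree w hP
  let W : (Fin N → ℝ) → ℝ := fun θ => ∑ j, (1 + Real.cos (θ j))
  have hfib : ∀ r, (T.filter fun θ => W θ = r).card ≤ P.rootMultiplicity r := fun r => by
    by_cases hr : 0 < r
    · refine card_fiber_le_rootMultiplicity w hP0 hP hr _ fun θ hθ => ?_
      obtain ⟨hθT, hθr⟩ := Finset.mem_filter.1 hθ
      obtain ⟨h1, h2, -⟩ := hT θ hθT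
      refine ⟨h1, fun i => ?_, hθr⟩
      rw [← hθr]
      exact h2 i
    · have hempty : (T.filter fun θ => W θ = r) = ∅ :=
        Finset.filter_eq_empty_iff.2 fun θ hθ h => hr (h ▸ (hT θ hθ).2.2)
      simp [hempty]
  have hmem : ∀ θ ∈ T, W θ ∈ P.roots.toFinset := fun θ hθ => by
    rw [Multiset.mem_toFinset, ← Multiset.count_pos, count_roots]
    refine lt_of_lt_of_le (Finset.card_pos.2 ⟨θ, ?_⟩) (hfib (W θ))
    exact Finset.mem_filter.2 ⟨hθ, rfl⟩
  calc T.card = ∑ r ∈ P.roots.toFinset, (T.filter fun θ => W θ = r).card :=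
        Finset.card_eq_sum_card_fiberwise hmem
    _ ≤ ∑ r ∈ P.roots.toFinset, P.roots.count r :=
        Finset.sum_le_sum fun r _ => (hfib r).trans_eq (count_roots P).symm
    _ = P.roots.card := Multiset.toFinset_sum_count_eq _
    _ ≤ 2 ^ (N + 1) := (card_roots' P).trans hdeg

lemma finite_and_ncard_le_of_finset_card_le {α : Type*} {S : Set α} {m : ℕ}
    (h : ∀ T : Finset α, (T : Set α) ⊆ S → T.card ≤ m) : S.Finite ∧ S.ncard ≤ m := by
  have hfin : S.Finite := by
    by_contra hinf
    obtain ⟨T, hTS, hT⟩ := Set.Infinite.exists_subset_card_eq hinf (m + 1)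
    have := h T hTS
    omega
  refine ⟨hfin, ?_⟩
  rw [Set.ncard_eq_toFinset_card S hfin]
  exact h _ (by simp)

theorem stmt19 (N : ℕ) (hN : 1 ≤ N) (ω : Fin N → ℝ) (κ : ℝ) (hκ : κ ≠ 0) :
    {θ0 : Fin N → ℝ | (∀ i, θ0 i ∈ Set.Ico 0 (2 * Real.pi)) ∧
        IsWinfreeEquilibrium N ω κ θ0}.Finite ∧
    {θ0 : Fin N → ℝ | (∀ i, θ0 i ∈ Set.Ico 0 (2 * Real.pi)) ∧
        IsWinfreeEquilibrium N ω κ θ0}.ncard ≤ 2 ^ (N + 1) := by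
  classical
  have hN0 : (N : ℝ) ≠ 0 := by exact_mod_cast (by omega : N ≠ 0)
  apply finite_and_ncard_le_of_finset_card_le
  intro T hT
  have hnn : ∀ (θ : Fin N → ℝ) (j : Fin N), 0 ≤ 1 + Real.cos (θ j) := fun θ j => by
    linarith [Real.neg_one_le_cos (θ j)]
  by_cases hω : ∀ i, ω i = 0
  · have hsub : T ⊆ Fintype.piFinset fun _ : Fin N => ({0, Real.pi} : Finset ℝ) := by
      intro θ hθ
      obtain ⟨hbox, heq⟩ := hT hθ
      rw [Fintype.mem_piFinset]
      intro i
      have hsin : Real.sin (θ i) = 0 := by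
        have h := heq i
        rw [hω i, eq_comm, mul_eq_zero, mul_eq_zero] at h
        rcases h with (h | h) | h
        · exact absurd h (div_ne_zero hκ hN0)
        · have h1 := (Finset.sum_eq_zero_iff_of_nonneg fun j _ => hnn θ j).1 h i (Finset.mem_univ i)
          have h2 := Real.sin_sq_add_cos_sq (θ i)
          have h3 : Real.cos (θ i) = -1 := by linarith
          rw [h3] at h2
          exact pow_eq_zero_iff (two_ne_zero) |>.1 (by linarith)
        · exact h
      have hpi := Real.pi_pos
      have h2 := Real.sin_sq_add_cos_sq (θ i)
      rw [hsin] at h2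
      have hc : (Real.cos (θ i) - 1) * (Real.cos (θ i) + 1) = 0 := by linarith
      rw [Finset.mem_insert, Finset.mem_singleton]
      rcases mul_eq_zero.1 hc with hc | hc
      · exact Or.inl (eq_of_cos_eq_sin_eq_of_mem_Ico (hbox i) ⟨le_rfl, by linarith⟩
          (by rw [Real.cos_zero]; linarith) (by rw [hsin, Real.sin_zero]))
      · exact Or.inr (eq_of_cos_eq_sin_eq_of_mem_Ico (hbox i) ⟨hpi.le, by linarith⟩
          (by rw [Real.cos_pi]; linarith) (by rw [hsin, Real.sin_pi]))
    calc T.card ≤ _ := Finset.card_le_card hsub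
      _ = 2 ^ N := by simp [Finset.card_pair Real.pi_ne_zero.symm]
      _ ≤ 2 ^ (N + 1) := Nat.pow_le_pow_right two_pos (by omega)
  · push Not at hω
    obtain ⟨k, hk⟩ := hω
    refine card_le_of_winfree (fun i => N / κ * ω i) T fun θ hθ => ?_
    obtain ⟨hbox, heq⟩ := hT hθ
    refine ⟨hbox, fun i => ?_, ?_⟩
    · rw [heq i]
      field_simp
    · refine lt_of_le_of_ne (Finset.sum_nonneg fun j _ => hnn θ j) fun h => hk ?_
      rw [heq k, ← h]
      simp
end
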